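/- arXiv:2503.00316 — 14 statements merged into one kernel-verified Lean document; each statement's English description precedes it below -/
import Mathlib

section
/- Let X be a compact metric space, f : X → X a continuous map, and S ⊆ X a subset such that (i) S is a distal set for f, and (ii) for every x ∈ S and every ε > 0 the set V_ε^s(x) is dense in X. Then for every integer n with 2 ≤ n < |S| + 1 there exists δ_n > 0 such that the set DC1_n^{δ_n}(X,f) of DC1-n-δ_n-scrambled n-tuples is a residual subset of X^n. -/
/-!
Both halves of the DC1 condition say that some open condition on tuples holds along a set of times
of upper density one. For open conditions `P i`, the tuples along which `P i` holds with upper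
density one form a residual set as soon as the tuples along which `P i` holds *eventually* are
dense (`residual_limsup_freq_eq_one`): that at some time `m ≥ N` the frequency exceeds `1 - 1/(N+1)`
is an open condition satisfied by the latter tuples, and Baire-generic tuples satisfy it for all
`N`.

Take distinct points `p 0, …, p (n-1)` of `S`, uniformly `c`-separated along their orbits. Tuples
`y` with `y j ∈ Vs f (p j) (c/8)` are dense and eventually more than `c/4` apart; tuples with
all `y j ∈ Vs f (p 0) (ε/4)` are dense and eventually less than `ε` apart. Intersecting over
`ε = 1/(k+1)` gives the theorem with `δ = c/4`.
-/

open Filter Topology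

/-- `V_ε^s(x)`: points whose forward orbit eventually stays ε-close (in limsup) to that of `x`. -/
def Vs {X : Type*} [MetricSpace X] (f : X → X) (x : X) (ε : ℝ) : Set X :=
  {y | Filter.limsup (fun i : ℕ => dist (f^[i] x) (f^[i] y)) Filter.atTop ≤ ε}

open Classical in
/-- A DC1-`n`-`δ`-scrambled tuple. -/
def DC1Scrambled {X : Type*} [MetricSpace X] (f : X → X) {n : ℕ} (δ : ℝ)
    (x : Fin n → X) : Prop :=
  Filter.limsup (fun m : ℕ =>
      ((((Finset.range m).filter fun i => ∀ j k : Fin n, j < k →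
        δ < dist (f^[i] (x j)) (f^[i] (x k))).card : ℝ) / m)) Filter.atTop = 1 ∧
  ∀ ε : ℝ, 0 < ε → Filter.limsup (fun m : ℕ =>
      ((((Finset.range m).filter fun i => ∀ j k : Fin n, j < k →
        dist (f^[i] (x j)) (f^[i] (x k)) < ε).card : ℝ) / m)) Filter.atTop = 1

/-- `S` is a distal set for `f`. -/
def DistalSet {X : Type*} [MetricSpace X] (f : X → X) (S : Set X) : Prop :=
  ∀ n : ℕ, 2 ≤ n → ∀ x : Fin n → X, (∀ j, x j ∈ S) → Function.Injective x →
    ∃ c : ℝ, 0 < c ∧ ∀ i : ℕ, ∀ j k : Fin n, j < k → c ≤ dist (f^[i] (x j)) (f^[i] (x k))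

/-- `f` restricted to `Λ` is minimal: `Λ` is the orbit closure of each of its points. -/
def MinimalOn {X : Type*} [TopologicalSpace X] (f : X → X) (Λ : Set X) : Prop :=
  ∀ x ∈ Λ, closure (Set.range fun i : ℕ => f^[i] x) = Λ

/-- `f` restricted to `Λ` is equicontinuous. -/
def EquicontOnSet {X : Type*} [MetricSpace X] (f : X → X) (Λ : Set X) : Prop :=
  ∀ ε : ℝ, 0 < ε → ∃ δ : ℝ, 0 < δ ∧ ∀ x ∈ Λ, ∀ y ∈ Λ, dist x y ≤ δ →
    ∀ i : ℕ, dist (f^[i] x) (f^[i] y) ≤ ε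

/-- Topological transitivity. -/
def IsTransitive {Z : Type*} [TopologicalSpace Z] (h : Z → Z) : Prop :=
  ∀ U V : Set Z, IsOpen U → IsOpen V → U.Nonempty → V.Nonempty →
    ∃ i : ℕ, ∃ z ∈ U, h^[i] z ∈ V

/-- `N(x,ε)` : times at which the orbit of `x` returns ε-close to `x`. -/
def retTimes {X : Type*} [MetricSpace X] (f : X → X) (x : X) (ε : ℝ) : Set ℕ :=
  {i : ℕ | dist x (f^[i] x) ≤ ε}

/-- `R(f,𝓕)`: the set of `𝓕`-recurrent points. -/
def FRecurrent {X : Type*} [MetricSpace X] (f : X → X) (F : Set (Set ℕ)) : Set X :=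
  {x | ∀ ε : ℝ, 0 < ε → retTimes f x ε ∈ F}

/-- The dual family `𝓕*`. -/
def dualFamily (F : Set (Set ℕ)) : Set (Set ℕ) :=
  {A | ∀ B ∈ F, (A ∩ B).Nonempty}

/-- `Δ(A)`, the difference set of `A`. -/
def deltaSet (A : Set ℕ) : Set ℕ :=
  {i | ∃ j ∈ A, ∃ k ∈ A, j ≤ k ∧ i = k - j}

/-- `Δ(𝓕)`. -/
def deltaFamily (F : Set (Set ℕ)) : Set (Set ℕ) :=
  {B | ∃ A ∈ F, 0 ∈ A ∧ deltaSet A ⊆ B}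

/-- `𝓕`-transitivity: `N(U,V) ∈ 𝓕` for all nonempty open `U, V`. -/
def FTransitive {X : Type*} [TopologicalSpace X] (f : X → X) (F : Set (Set ℕ)) : Prop :=
  ∀ U V : Set X, IsOpen U → IsOpen V → U.Nonempty → V.Nonempty →
    {i : ℕ | ∃ x ∈ U, f^[i] x ∈ V} ∈ F

/-- If open conditions `P i` hold eventually on a dense set of points, then for generic points the
set of times `i` at which `P i` holds has upper density one. -/
theorem residual_limsup_freq_eq_one {Y : Type*} [TopologicalSpace Y] (P : ℕ → Y → Prop)
    [∀ y, DecidablePred fun i => P i y] (hopen : ∀ i, IsOpen {y | P i y})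
    (hdense : Dense {y | ∀ᶠ i in atTop, P i y}) :
    {y | limsup (fun m : ℕ => ((((Finset.range m).filter fun i => P i y).card : ℝ) / m))
      atTop = 1} ∈ residual Y := by
  let F : ℕ → Y → ℝ := fun m y => (((Finset.range m).filter fun i => P i y).card : ℝ) / m
  have hF1 : ∀ m y, F m y ≤ 1 := by
    intro m y
    refine div_le_one_of_le₀ ?_ (Nat.cast_nonneg m)
    have := Finset.card_filter_le (Finset.range m) (fun i => P i y)
    rw [Finset.card_range] at this
    exact_mod_cast this
  have hF0 : ∀ m y, 0 ≤ F m y := fun m y => by positivity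
  -- Near `y`, every condition `P i` with `i < m` that holds at `y` still holds.
  have hFopen : ∀ m (a : ℝ), IsOpen {y | a < F m y} := by
    intro m a
    rw [isOpen_iff_mem_nhds]
    intro y hy
    have hev : ∀ᶠ z in 𝓝 y, ∀ i ∈ (Finset.range m).filter (fun i => P i y), P i z := by
      rw [Filter.eventually_all_finset]
      intro i hi
      exact (hopen i).mem_nhds (Finset.mem_filter.1 hi).2
    filter_upwards [hev] with z hz
    refine lt_of_lt_of_le (show a < F m y from hy) ?_
    have : ((Finset.range m).filter fun i => P i y).card
        ≤ ((Finset.range m).filter fun i => P i z).card := by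
      refine Finset.card_le_card fun i hi => ?_
      exact Finset.mem_filter.2 ⟨(Finset.mem_filter.1 hi).1, hz i hi⟩
    exact div_le_div_of_nonneg_right (by exact_mod_cast this) (Nat.cast_nonneg m)
  have hres : ∀ N : ℕ, (⋃ m ≥ N, {y | 1 - 1 / ((N : ℝ) + 1) < F m y}) ∈ residual Y := by
    intro N
    refine residual_of_dense_open
      (isOpen_iUnion fun m => isOpen_iUnion fun _ => hFopen m _) (hdense.mono ?_)
    intro y hy
    obtain ⟨K, hK⟩ := eventually_atTop.1 hy
    -- At most `K` of the first `m` times fail, so `m > K (N + 1)` makes the frequency large.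
    let m := N + K * (N + 1) + 1
    simp only [Set.mem_iUnion]
    refine ⟨m, by simp only [m, ge_iff_le]; omega, ?_⟩
    have hcard : m ≤ ((Finset.range m).filter fun i => P i y).card + K := by
      have hsub : Finset.Ico K m ⊆ (Finset.range m).filter fun i => P i y := by
        intro i hi
        rw [Finset.mem_Ico] at hi
        exact Finset.mem_filter.2 ⟨Finset.mem_range.2 hi.2, hK i hi.1⟩
      have := Finset.card_le_card hsub
      rw [Nat.card_Ico] at this
      omega
    have hcard' : (m : ℝ) ≤ ((Finset.range m).filter fun i => P i y).card + K := by
      exact_mod_cast hcard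
    have hm : (K : ℝ) * (N + 1) < m := by
      have : K * (N + 1) < m := by simp only [m]; omega
      exact_mod_cast this
    have hN : (0 : ℝ) < (N : ℝ) + 1 := by positivity
    have hmpos : (0 : ℝ) < m := lt_of_le_of_lt (by positivity) hm
    have hK' : (K : ℝ) < m / ((N : ℝ) + 1) := by rwa [lt_div_iff₀ hN]
    change 1 - 1 / ((N : ℝ) + 1) < _ / (m : ℝ)
    rw [lt_div_iff₀ hmpos]
    have : (1 - 1 / ((N : ℝ) + 1)) * m = m - m / ((N : ℝ) + 1) := by ring
    linarith
  filter_upwards [countable_iInter_mem.2 hres] with y hy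
  rw [Set.mem_iInter] at hy
  change limsup (fun m => F m y) atTop = 1
  have hbdd : IsBoundedUnder (· ≤ ·) atTop fun m => F m y :=
    isBoundedUnder_of ⟨1, fun m => hF1 m y⟩
  have hbdd' : IsBoundedUnder (· ≥ ·) atTop fun m => F m y :=
    isBoundedUnder_of ⟨0, fun m => hF0 m y⟩
  refine le_antisymm
    (limsup_le_of_le hbdd'.isCoboundedUnder_le (Eventually.of_forall fun m => hF1 m y)) ?_
  refine le_of_forall_lt fun a ha => ?_
  obtain ⟨b, hab, hb⟩ := exists_between ha
  refine hab.trans_le (le_limsup_of_frequently_le ?_ hbdd)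
  rw [frequently_atTop]
  intro M
  obtain ⟨N₀, hN₀⟩ := exists_nat_one_div_lt (sub_pos.2 hb)
  have hyN := hy (max M N₀)
  simp only [Set.mem_iUnion] at hyN
  obtain ⟨m, hm, hlt⟩ := hyN
  refine ⟨m, (le_max_left _ _).trans hm, ?_⟩
  have hle : 1 / (((max M N₀ : ℕ) : ℝ) + 1) ≤ 1 / ((N₀ : ℝ) + 1) := by
    apply one_div_le_one_div_of_le (by positivity)
    have : (N₀ : ℝ) ≤ ((max M N₀ : ℕ) : ℝ) := by exact_mod_cast le_max_right M N₀
    linarith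
  have hlt' : 1 - 1 / (((max M N₀ : ℕ) : ℝ) + 1) < F m y := hlt
  linarith

theorem eventually_dist_lt_of_mem_Vs {X : Type*} [MetricSpace X] [CompactSpace X] {f : X → X}
    {x y : X} {ε η : ℝ} (h : y ∈ Vs f x ε) (hη : ε < η) :
    ∀ᶠ i in atTop, dist (f^[i] x) (f^[i] y) < η := by
  refine eventually_lt_of_limsup_lt (lt_of_le_of_lt (show limsup _ _ ≤ ε from h) hη) ?_
  exact isBoundedUnder_of ⟨Metric.diam (Set.univ : Set X), fun i =>
    Metric.dist_le_diam_of_mem isCompact_univ.isBounded (Set.mem_univ _) (Set.mem_univ _)⟩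

/-- Tuples shadowing given orbits of points of `S`, up to an arbitrary error, are dense. -/
theorem dense_shadowing {X : Type*} [MetricSpace X] [CompactSpace X] {f : X → X} {S : Set X}
    (hdense : ∀ x ∈ S, ∀ ε : ℝ, 0 < ε → Dense (Vs f x ε)) {n : ℕ} (p : Fin n → X)
    (hp : ∀ j, p j ∈ S) {η : ℝ} (hη : 0 < η) :
    Dense {y : Fin n → X | ∀ᶠ i in atTop, ∀ j, dist (f^[i] (p j)) (f^[i] (y j)) < η} := by
  have hpi : Dense (Set.univ.pi fun j => Vs f (p j) (η / 2)) :=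
    dense_pi _ fun j _ => hdense (p j) (hp j) _ (half_pos hη)
  refine hpi.mono fun y hy => ?_
  exact eventually_all.2 fun j =>
    eventually_dist_lt_of_mem_Vs (hy j (Set.mem_univ j)) (half_lt_self hη)

/-- Lemma 1.1: if `S` is a distal set for `f` and every `V_ε^s(x)`, `x ∈ S`,
is dense, then for each `2 ≤ n < |S| + 1` the set of DC1-`n`-`δₙ`-scrambled tuples is
residual in `Xⁿ` for some `δₙ > 0`. -/
theorem dc1_of_distal_dense {X : Type*} [MetricSpace X] [CompactSpace X]
    (f : X → X) (hf : Continuous f) (S : Set X)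
    (hdistal : DistalSet f S)
    (hdense : ∀ x ∈ S, ∀ ε : ℝ, 0 < ε → Dense (Vs f x ε)) :
    ∀ n : ℕ, 2 ≤ n → (n : Cardinal) < Cardinal.mk S + 1 →
      ∃ δ : ℝ, 0 < δ ∧ {x : Fin n → X | DC1Scrambled f δ x} ∈ residual (Fin n → X) := by
  classical
  intro n hn hcard
  have hle : (n : Cardinal) ≤ Cardinal.mk S := by
    by_contra! h
    obtain ⟨k, hk⟩ := Cardinal.lt_aleph0.1 (h.trans (Cardinal.natCast_lt_aleph0 (n := n)))
    rw [hk] at hcard h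
    norm_cast at hcard h
    omega
  obtain ⟨p, hpS, hpinj⟩ : ∃ p : Fin n → X, (∀ j, p j ∈ S) ∧ Function.Injective p := by
    have : Cardinal.lift.{_, 0} (Cardinal.mk (Fin n)) ≤ Cardinal.lift.{0} (Cardinal.mk S) := by
      simpa using hle
    obtain ⟨e⟩ := Cardinal.lift_mk_le'.1 this
    exact ⟨fun j => e j, fun j => (e j).2, Subtype.val_injective.comp e.injective⟩
  obtain ⟨c, hc, hsep⟩ := hdistal n hn p hpS hpinj
  have hcont : ∀ (i : ℕ) (j k : Fin n),
      Continuous fun y : Fin n → X => dist (f^[i] (y j)) (f^[i] (y k)) := fun i j k =>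
    ((hf.iterate i).comp (continuous_apply j)).dist ((hf.iterate i).comp (continuous_apply k))
  refine ⟨c / 4, by positivity, ?_⟩
  have hfar := residual_limsup_freq_eq_one
    (fun i (y : Fin n → X) => ∀ j k : Fin n, j < k → c / 4 < dist (f^[i] (y j)) (f^[i] (y k)))
    (fun i => by
      simp only [Set.ofPred_forall]
      exact isOpen_iInter_of_finite fun j => isOpen_iInter_of_finite fun k =>
        isOpen_iInter_of_finite fun _ => isOpen_lt continuous_const (hcont i j k))
    ((dense_shadowing hdense p hpS (η := c / 4) (by positivity)).mono fun y hy => by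
      refine hy.mono fun i hi j k hjk => ?_
      have h1 := hsep i j k hjk
      have h2 := dist_triangle4 (f^[i] (p j)) (f^[i] (y j)) (f^[i] (y k)) (f^[i] (p k))
      have h3 := hi j
      have h4 := hi k
      rw [dist_comm] at h4
      linarith)
  have hnear : ∀ l : ℕ, _ ∈ residual (Fin n → X) := fun l => residual_limsup_freq_eq_one
    (fun i (y : Fin n → X) => ∀ j k : Fin n, j < k →
      dist (f^[i] (y j)) (f^[i] (y k)) < 1 / ((l : ℝ) + 1))
    (fun i => by
      simp only [Set.ofPred_forall]
      exact isOpen_iInter_of_finite fun j => isOpen_iInter_of_finite fun k =>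
        isOpen_iInter_of_finite fun _ => isOpen_lt (hcont i j k) continuous_const)
    ((dense_shadowing hdense (fun _ => p ⟨0, by omega⟩) (fun _ => hpS _)
        (η := 1 / ((l : ℝ) + 1) / 2) (by positivity)).mono fun y hy => by
      refine hy.mono fun i hi j k _ => ?_
      have h2 := dist_triangle_left (f^[i] (y j)) (f^[i] (y k)) (f^[i] (p ⟨0, by omega⟩))
      have h3 := hi j
      have h4 := hi k
      linarith)
  filter_upwards [hfar, countable_iInter_mem.2 hnear] with y hy1 hy2
  rw [Set.mem_iInter] at hy2
  refine ⟨by convert hy1, fun ε hε => ?_⟩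
  -- The frequency for `ε` lies between the one for some `1 / (l + 1) < ε` and `1`.
  obtain ⟨l, hl⟩ := exists_nat_one_div_lt hε
  have hyl := hy2 l
  rw [Set.mem_ofPred_eq] at hyl
  have hup : ∀ (Q : ℕ → Prop) [DecidablePred Q] (m : ℕ),
      (((Finset.range m).filter Q).card : ℝ) / m ≤ 1 := by
    intro Q _ m
    refine div_le_one_of_le₀ ?_ (Nat.cast_nonneg m)
    have := Finset.card_filter_le (Finset.range m) Q
    rw [Finset.card_range] at this
    exact_mod_cast this
  have hcob : ∀ (Q : ℕ → Prop) [DecidablePred Q], IsCoboundedUnder (· ≤ ·) atTop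
      fun m : ℕ => (((Finset.range m).filter Q).card : ℝ) / m := fun Q _ =>
    IsBoundedUnder.isCoboundedUnder_le (isBoundedUnder_of ⟨0, fun m => by positivity⟩)
  refine le_antisymm (limsup_le_of_le (hcob _) (Eventually.of_forall fun m => hup _ m)) ?_
  refine hyl.symm.le.trans (limsup_le_limsup (Eventually.of_forall fun m => ?_) (hcob _)
    (isBoundedUnder_of ⟨1, fun m => hup _ m⟩))
  refine div_le_div_of_nonneg_right ?_ (Nat.cast_nonneg m)
  refine Nat.cast_le.2 (Finset.card_le_card fun i hi => ?_)
  rw [Finset.mem_filter] at hi ⊢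
  exact ⟨hi.1, fun j k hjk => (hi.2 j k hjk).trans hl⟩
end

section
/- Let X be a compact metric space, f : X → X a continuous map, and Λ ⊆ X a minimal set for f. If f is surjective and there exists x ∈ Λ such that V_ε^s(x) is dense in X for every ε > 0, then for every integer n with 2 ≤ n < |Λ| + 1 there exists δ_n > 0 such that DC1_n^{δ_n}(X,f) is a residual subset of X^n. -/
/-!
Both halves of the DC1 condition are `Gδ`-type conditions, so it suffices to exhibit, for each of
them, a dense set of tuples which satisfy the relevant open condition at all but finitely many
times (`residual_frequent`).

*Proximality.* If all coordinates lie in `V_ε^s(x)`, the coordinates are eventually pairwise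
close; such tuples are dense because `V_ε^s(x)` is.

*Separation.* Since `f` is surjective, the image of a dense set is dense, so `V_ε^s(f^j x)` is
dense for every `j` (`dense_shadow_iterate`). If `n ≤ |Λ|`, no point of `Λ` satisfies `f^j z = z`
with `0 < j < n`, since its orbit closure, which is `Λ`, would have at most `j` points. By
compactness `dist z (f^j z)` is bounded below on `Λ` by some `c > 0` (`exists_separation`), so
tuples in `∏_j V_ε^s(f^j x)` with `ε` small compared to `c` are eventually pairwise more than
`c / 4` apart.
-/

open Filter Topology

/-- Points whose forward orbit is eventually within `ε` of the orbit of `x`: a variant of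
`Vs f x ε` phrased without `limsup`. -/
def shadow {X : Type*} [MetricSpace X] (f : X → X) (x : X) (ε : ℝ) : Set X :=
  {y | ∀ᶠ i : ℕ in atTop, dist (f^[i] x) (f^[i] y) < ε}

lemma Vs_subset_shadow {X : Type*} [MetricSpace X] [CompactSpace X] (f : X → X) (x : X)
    {ε ε' : ℝ} (h : ε < ε') : Vs f x ε ⊆ shadow f x ε' := by
  intro y hy
  refine eventually_lt_of_limsup_lt (lt_of_le_of_lt hy h) ?_
  exact isBoundedUnder_of ⟨Metric.diam (Set.univ : Set X), fun i =>
    Metric.dist_le_diam_of_mem isCompact_univ.isBounded (Set.mem_univ _) (Set.mem_univ _)⟩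

lemma dense_shadow_iterate {X : Type*} [MetricSpace X] {f : X → X} (hf : Continuous f)
    (hsurj : Function.Surjective f) {x : X} {ε : ℝ} (h : Dense (shadow f x ε)) (j : ℕ) :
    Dense (shadow f (f^[j] x) ε) := by
  refine ((hsurj.iterate j).denseRange.dense_image (hf.iterate j) h).mono ?_
  rintro _ ⟨y, hy, rfl⟩
  filter_upwards [(tendsto_add_atTop_nat j).eventually hy] with i hi
  simpa only [Function.iterate_add_apply] using hi

/-- If points lying in all but finitely many of the open sets `O i` are dense, then generically
the times `i` with `z ∈ O i` have upper density one. -/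
lemma residual_frequent {Z : Type*} [TopologicalSpace Z] (O : ℕ → Set Z)
    (hO : ∀ i, IsOpen (O i)) (hd : Dense {z | ∀ᶠ i in atTop, z ∈ O i}) :
    ∀ᶠ z in residual Z, ∀ N : ℕ, ∃ m ≥ N, ∃ s : Finset ℕ, s ⊆ Finset.range m ∧
      (∀ i ∈ s, z ∈ O i) ∧ 1 - 1 / ((N : ℝ) + 1) < (s.card : ℝ) / m := by
  rw [eventually_countable_forall]
  intro N
  refine residual_of_dense_open ?_ ?_
  · rw [isOpen_iff_mem_nhds]
    rintro z ⟨m, hm, s, hs, hsO, hc⟩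
    have : ∀ᶠ w in 𝓝 z, ∀ i ∈ s, w ∈ O i :=
      (Filter.eventually_all_finset s).2 fun i hi => (hO i).mem_nhds (hsO i hi)
    filter_upwards [this] with w hw
    exact ⟨m, hm, s, hs, hw, hc⟩
  · refine hd.mono ?_
    intro z hz
    obtain ⟨K, hK⟩ := eventually_atTop.1 hz
    -- The times in `[K, m)` have proportion `1 - K / m`, and `K * (N + 1) < m` makes this large.
    refine ⟨K * (N + 1) + N + 1, by nlinarith [Nat.zero_le (K * (N + 1))],
      Finset.Ico K (K * (N + 1) + N + 1), ?_, ?_, ?_⟩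
    · intro i hi
      simp only [Finset.mem_Ico, Finset.mem_range] at hi ⊢
      exact hi.2
    · intro i hi
      exact hK i (Finset.mem_Ico.1 hi).1
    · have hle : K ≤ K * (N + 1) + N + 1 := by nlinarith [Nat.zero_le (K * N)]
      rw [Nat.card_Ico, Nat.cast_sub hle]
      push_cast
      have h1 : (0 : ℝ) < (N : ℝ) + 1 := by positivity
      have h2 : (0 : ℝ) < (K : ℝ) * (N + 1) + N + 1 := by positivity
      rw [sub_div, div_self h2.ne', sub_lt_sub_iff_left, div_lt_div_iff₀ h2 h1]
      linarith

lemma limsup_eq_one_of_frequent (p : ℕ → Prop) [DecidablePred p]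
    (h : ∀ N : ℕ, ∃ m ≥ N, ∃ s : Finset ℕ, s ⊆ Finset.range m ∧
      (∀ i ∈ s, p i) ∧ 1 - 1 / ((N : ℝ) + 1) < (s.card : ℝ) / m) :
    limsup (fun m : ℕ => (((Finset.range m).filter p).card : ℝ) / m) atTop = 1 := by
  have hle : ∀ m : ℕ, (((Finset.range m).filter p).card : ℝ) / m ≤ 1 := by
    intro m
    refine div_le_one_of_le₀ ?_ (Nat.cast_nonneg m)
    exact_mod_cast (Finset.card_filter_le _ _).trans (Finset.card_range m).le
  have hnn : ∀ m : ℕ, 0 ≤ (((Finset.range m).filter p).card : ℝ) / m := fun m => by positivity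
  apply le_antisymm
  · exact limsup_le_of_le (isCoboundedUnder_le_of_le atTop hnn) (Eventually.of_forall hle)
  · refine le_of_forall_lt fun a ha => ?_
    obtain ⟨b, hab, hb⟩ := exists_between ha
    refine lt_of_lt_of_le hab (le_limsup_of_frequently_le ?_ (isBoundedUnder_of ⟨1, hle⟩))
    rw [frequently_atTop]
    intro M
    obtain ⟨k, hk⟩ := exists_nat_one_div_lt (sub_pos.2 hb)
    obtain ⟨m, hm, s, hs, hsp, hc⟩ := h (max M k)
    refine ⟨m, (le_max_left _ _).trans hm, ?_⟩
    have h1 : 1 / (((max M k : ℕ) : ℝ) + 1) ≤ 1 / ((k : ℝ) + 1) := by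
      apply one_div_le_one_div_of_le (by positivity)
      have : (k : ℝ) ≤ ((max M k : ℕ) : ℝ) := by exact_mod_cast le_max_right M k
      linarith
    have h2 : (s.card : ℝ) / m ≤ (((Finset.range m).filter p).card : ℝ) / m := by
      have : s.card ≤ ((Finset.range m).filter p).card :=
        Finset.card_le_card fun i hi => Finset.mem_filter.2 ⟨hs hi, hsp i hi⟩
      gcongr
    linarith

/-- A minimal set with at least `n` points has no point of period less than `n`. -/
lemma iterate_ne_of_minimal {X : Type*} [MetricSpace X] {f : X → X} {Λ : Set X}
    (hmin : MinimalOn f Λ) {n : ℕ} (hn : (n : Cardinal) ≤ Cardinal.mk Λ) {j : ℕ} (hj : 0 < j)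
    (hjn : j < n) {z : X} (hz : z ∈ Λ) : f^[j] z ≠ z := by
  classical
  intro hper
  set s : Finset X := (Finset.range j).image fun i => f^[i] z with hs
  have hsub : (Set.range fun i : ℕ => f^[i] z) ⊆ (s : Set X) := by
    rintro _ ⟨i, rfl⟩
    have hp : Function.IsPeriodicPt f j z := hper
    rw [hs, Finset.coe_image]
    exact ⟨i % j, by simpa using Nat.mod_lt i hj, hp.iterate_mod_apply i⟩
  have hΛ : Λ ⊆ (s : Set X) := by
    rw [← hmin z hz]
    exact closure_minimal hsub s.finite_toSet.isClosed
  have h1 : Cardinal.mk Λ ≤ s.card := by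
    simpa using Cardinal.mk_le_mk_of_subset hΛ
  have h2 : s.card ≤ j := Finset.card_image_le.trans (Finset.card_range j).le
  have h3 : n ≤ s.card := by exact_mod_cast hn.trans h1
  omega

lemma exists_separation {X : Type*} [MetricSpace X] [CompactSpace X] {f : X → X}
    (hf : Continuous f) {Λ : Set X} (hclosed : IsClosed Λ) (hmin : MinimalOn f Λ) {n : ℕ}
    (hn : (n : Cardinal) ≤ Cardinal.mk Λ) :
    ∃ c : ℝ, 0 < c ∧ ∀ j, 0 < j → j < n → ∀ z ∈ Λ, c ≤ dist z (f^[j] z) := by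
  have hone : ∀ j : ℕ, ∃ c : ℝ, 0 < c ∧ (0 < j → j < n → ∀ z ∈ Λ, c ≤ dist z (f^[j] z)) := by
    intro j
    by_cases hj : 0 < j ∧ j < n
    · obtain ⟨c, hc, h⟩ := hclosed.isCompact.exists_forall_le' (a := (0 : ℝ))
        (f := fun z => dist z (f^[j] z)) (continuous_id.dist (hf.iterate j)).continuousOn
        (fun z hz => dist_pos.2 (iterate_ne_of_minimal hmin hn hj.1 hj.2 hz).symm)
      exact ⟨c, hc, fun _ _ => h⟩
    · exact ⟨1, one_pos, fun h1 h2 => absurd ⟨h1, h2⟩ hj⟩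
  choose c hc h using hone
  rcases Nat.eq_zero_or_pos n with rfl | hpos
  · exact ⟨1, one_pos, fun j _ h => absurd h (Nat.not_lt_zero j)⟩
  · have hne : (Finset.range n).Nonempty := ⟨0, Finset.mem_range.2 hpos⟩
    refine ⟨(Finset.range n).inf' hne c, (Finset.lt_inf'_iff hne).2 fun j _ => hc j, ?_⟩
    intro j hj hjn z hz
    exact (Finset.inf'_le c (Finset.mem_range.2 hjn)).trans (h j hj hjn z hz)

/-- Tuples whose `j`-th coordinate shadows the orbit of `a j` are eventually in `O i`, whenever
`O i` contains all tuples with `f^i`-image coordinatewise `ε`-close to that of `a`. -/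
lemma dense_eventually_of_shadow {X : Type*} [MetricSpace X] {f : X → X} {n : ℕ} {ε : ℝ}
    {a : Fin n → X} (hd : ∀ j, Dense (shadow f (a j) ε)) (O : ℕ → Set (Fin n → X))
    (hO : ∀ i y, (∀ j, dist (f^[i] (a j)) (f^[i] (y j)) < ε) → y ∈ O i) :
    Dense {y | ∀ᶠ i in atTop, y ∈ O i} := by
  refine (dense_pi Set.univ fun j _ => hd j).mono ?_
  intro y hy
  have : ∀ᶠ i in atTop, ∀ j, dist (f^[i] (a j)) (f^[i] (y j)) < ε :=
    eventually_all.2 fun j => hy j (Set.mem_univ j)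
  filter_upwards [this] with i hi
  exact hO i y hi

/-- Corollary of Lemma 1.1: if `Λ` is a minimal set for a surjective `f` and
some `x ∈ Λ` has all `V_ε^s(x)` dense, then for each `2 ≤ n < |Λ| + 1` the set of
DC1-`n`-`δₙ`-scrambled tuples is residual in `Xⁿ` for some `δₙ > 0`. -/
theorem dc1_of_minimal_surjective {X : Type*} [MetricSpace X] [CompactSpace X]
    (f : X → X) (hf : Continuous f) (Λ : Set X)
    (hclosed : IsClosed Λ) (hinv : Set.MapsTo f Λ Λ) (hmin : MinimalOn f Λ)
    (hsurj : Function.Surjective f)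
    (hdense : ∃ x ∈ Λ, ∀ ε : ℝ, 0 < ε → Dense (Vs f x ε)) :
    ∀ n : ℕ, 2 ≤ n → (n : Cardinal) < Cardinal.mk Λ + 1 →
      ∃ δ : ℝ, 0 < δ ∧ {x : Fin n → X | DC1Scrambled f δ x} ∈ residual (Fin n → X) := by
  intro n _ hcard
  have hn : (n : Cardinal) ≤ Cardinal.mk Λ :=
    Order.lt_succ_iff.1 (hcard.trans_le (Cardinal.add_one_le_of_lt (Order.lt_succ _)))
  obtain ⟨x, hx, hV⟩ := hdense
  have hS : ∀ ε : ℝ, 0 < ε → Dense (shadow f x ε) := fun ε hε =>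
    (hV (ε / 2) (half_pos hε)).mono (Vs_subset_shadow f x (half_lt_self hε))
  obtain ⟨c, hc, hsep⟩ := exists_separation hf hclosed hmin hn
  have hcont : ∀ (i : ℕ) (j k : Fin n),
      Continuous fun y : Fin n → X => dist (f^[i] (y j)) (f^[i] (y k)) := fun i j k =>
    ((hf.iterate i).comp (continuous_apply j)).dist ((hf.iterate i).comp (continuous_apply k))
  refine ⟨c / 4, by positivity, ?_⟩
  have hfar := residual_frequent
    (fun i => {y : Fin n → X | ∀ j k : Fin n, j < k → c / 4 < dist (f^[i] (y j)) (f^[i] (y k))})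
    (fun i => by
      simp only [Set.ofPred_forall]
      exact isOpen_iInter_of_finite fun j => isOpen_iInter_of_finite fun k =>
        isOpen_iInter_of_finite fun _ => isOpen_lt continuous_const (hcont i j k))
    (dense_eventually_of_shadow (ε := c / 4) (a := fun j : Fin n => f^[(j : ℕ)] x)
      (fun j => dense_shadow_iterate hf hsurj (hS _ (by positivity)) j) _ (by
        intro i y hy j k hjk
        -- `f^i (f^k x)` is the image of `f^i (f^j x) ∈ Λ` under `f^(k - j)`.
        have hmem : f^[i] (f^[(j : ℕ)] x) ∈ Λ := hinv.iterate i (hinv.iterate j hx)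
        have hjk' : (j : ℕ) < k := hjk
        have h0 := hsep (k - j) (by omega) (by omega) _ hmem
        have heq : f^[(k : ℕ) - j] (f^[i] (f^[(j : ℕ)] x)) = f^[i] (f^[(k : ℕ)] x) := by
          simp only [← Function.iterate_add_apply]
          rw [show (k : ℕ) - j + (i + j) = i + k by omega]
        rw [heq] at h0
        have h1 := hy j
        have h2 := hy k
        have h3 := dist_triangle4_right (f^[i] (f^[(j : ℕ)] x)) (f^[i] (f^[(k : ℕ)] x))
          (f^[i] (y j)) (f^[i] (y k))
        linarith))
  have hnear := fun q : ℕ => residual_frequent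
    (fun i => {y : Fin n → X | ∀ j k : Fin n, j < k →
      dist (f^[i] (y j)) (f^[i] (y k)) < 1 / ((q : ℝ) + 1)})
    (fun i => by
      simp only [Set.ofPred_forall]
      exact isOpen_iInter_of_finite fun j => isOpen_iInter_of_finite fun k =>
        isOpen_iInter_of_finite fun _ => isOpen_lt (hcont i j k) continuous_const)
    (dense_eventually_of_shadow (ε := 1 / ((q : ℝ) + 1) / 2) (a := fun _ : Fin n => x)
      (fun j => hS _ (by positivity)) _ (by
        intro i y hy j k _
        have h1 := hy j
        have h2 := hy k
        have h3 := dist_triangle_left (f^[i] (y j)) (f^[i] (y k)) (f^[i] x)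
        show dist (f^[i] (y j)) (f^[i] (y k)) < 1 / ((q : ℝ) + 1)
        linarith))
  filter_upwards [hfar, eventually_countable_forall.2 hnear] with y hy1 hy2
  refine ⟨limsup_eq_one_of_frequent _ hy1, fun ε hε => limsup_eq_one_of_frequent _ fun N => ?_⟩
  obtain ⟨q, hq⟩ := exists_nat_one_div_lt hε
  obtain ⟨m, hm, s, hs, hsO, hlt⟩ := hy2 q N
  exact ⟨m, hm, s, hs, fun i hi j k hjk => (hsO i hi j k hjk).trans hq, hlt⟩
end

section
/- Let X be a compact metric space, f : X → X a continuous map, and Λ ⊆ X a closed f-invariant subset such that (1) the restriction f|_Λ : Λ → Λ is minimal and equicontinuous, (2) for every ε > 0 the union ⋃_{x∈Λ} V_ε^s(x) is dense in X, and (3) the product map f|_Λ × f : Λ × X → Λ × X is transitive. Then for every integer n with 2 ≤ n < |Λ| + 1 there exists δ_n > 0 such that DC1_n^{δ_n}(X,f) is a residual subset of X^n. -/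
/-!
Every stable set is already dense on its own. By equicontinuity and compactness, finitely many
points `p` of `Λ` suffice for the stable sets `V_ε^s(p)` to have dense union, so by Baire one of
them is dense in some non-empty open set `O`. Given `z ∈ Λ` and an open set `W`, transitivity of
`f|_Λ × f` gives an `i` with `f^i(p)` close to `z` and `f^i(O) ∩ W ≠ ∅`; since `f^i` carries the
stable set of `p` into that of `f^i(p)`, the stable set of `z` meets `W`
(`dense_stableSet`).

A minimal equicontinuous map is distal (`distal_pair`), so `n` distinct points `z_j` of `Λ`
have orbits that stay at distance `≥ c > 0` from each other. Tuples with `x_j` in the stable set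
of `z_j` are dense in `Xⁿ` and eventually `c/2`-separated; tuples with all `x_j` in the stable set
of one point `z` are dense and eventually `ε`-close. Finally, if the tuples that lie eventually in
the open sets `P i` are dense, then generically the times `i` with `x ∈ P i` have upper density one
(`residual_fullUpper`).
-/

open Filter Topology

/-! ### Sets of times of upper density one -/

open Classical in
/-- `A` has upper density one, phrased without `limsup` so that it visibly defines a `G_δ`
condition and is visibly monotone in `A`. -/
def FullUpper (A : Set ℕ) : Prop :=
  ∀ q M : ℕ, ∃ m : ℕ, M < m ∧
    (1 - 1 / ((q : ℝ) + 1)) * m < (((Finset.range m).filter fun i => i ∈ A).card : ℝ)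

lemma FullUpper.mono {A B : Set ℕ} (h : FullUpper A) (hAB : A ⊆ B) : FullUpper B := by
  classical
  intro q M
  obtain ⟨m, hm, hlt⟩ := h q M
  refine ⟨m, hm, hlt.trans_le ?_⟩
  exact_mod_cast Finset.card_le_card (Finset.monotone_filter_right _ (fun i _ hi => hAB hi))

open Classical in
lemma FullUpper.limsup_eq {A : Set ℕ} (h : FullUpper A) :
    Filter.limsup (fun m : ℕ =>
      ((((Finset.range m).filter fun i => i ∈ A).card : ℝ) / m)) atTop = 1 := by
  have hle : ∀ m : ℕ, ((((Finset.range m).filter fun i => i ∈ A).card : ℝ) / m) ≤ 1 := by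
    intro m
    apply div_le_one_of_le₀ _ (Nat.cast_nonneg m)
    have := Finset.card_filter_le (Finset.range m) (fun i => i ∈ A)
    rw [Finset.card_range] at this
    exact_mod_cast this
  have hnn : ∀ m : ℕ, 0 ≤ ((((Finset.range m).filter fun i => i ∈ A).card : ℝ) / m) :=
    fun m => by positivity
  have hbdd : IsBoundedUnder (· ≤ ·) atTop (fun m : ℕ =>
      ((((Finset.range m).filter fun i => i ∈ A).card : ℝ) / m)) :=
    isBoundedUnder_of ⟨1, hle⟩
  have hcob : IsCoboundedUnder (· ≤ ·) atTop (fun m : ℕ =>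
      ((((Finset.range m).filter fun i => i ∈ A).card : ℝ) / m)) :=
    (isBoundedUnder_of ⟨0, hnn⟩ : IsBoundedUnder (· ≥ ·) atTop _).isCoboundedUnder_le
  apply le_antisymm
  · exact limsup_le_of_le hcob (Eventually.of_forall hle)
  · apply le_of_forall_pos_lt_add
    intro e he
    obtain ⟨q, hq⟩ := exists_nat_one_div_lt he
    have : 1 - 1 / ((q : ℝ) + 1) ≤ Filter.limsup (fun m : ℕ =>
        ((((Finset.range m).filter fun i => i ∈ A).card : ℝ) / m)) atTop := by
      apply le_limsup_of_frequently_le _ hbdd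
      rw [frequently_atTop]
      intro M
      obtain ⟨m, hm, hlt⟩ := h q M
      refine ⟨m, hm.le, ?_⟩
      have hm0 : (0 : ℝ) < m := by exact_mod_cast (Nat.zero_le M).trans_lt hm
      rw [le_div_iff₀ hm0]
      exact hlt.le
    linarith

lemma fullUpper_of_eventually {A : Set ℕ} (h : ∀ᶠ i in atTop, i ∈ A) : FullUpper A := by
  classical
  intro q M
  obtain ⟨N, hN⟩ := eventually_atTop.1 h
  -- The times in `[N, m)` all count; `m > (q + 1) N` makes the other `N` negligible.
  refine ⟨(q + 1) * N + M + 1, by nlinarith [Nat.zero_le ((q + 1) * N)], ?_⟩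
  set m := (q + 1) * N + M + 1 with hm
  have hsub : Finset.Ico N m ⊆ (Finset.range m).filter fun i => i ∈ A := by
    intro i hi
    rw [Finset.mem_Ico] at hi
    exact Finset.mem_filter.2 ⟨Finset.mem_range.2 hi.2, hN i hi.1⟩
  have hcard := Finset.card_le_card hsub
  rw [Nat.card_Ico] at hcard
  have h1 : (m : ℝ) ≤ (((Finset.range m).filter fun i => i ∈ A).card : ℝ) + N := by
    exact_mod_cast (by omega : m ≤ ((Finset.range m).filter fun i => i ∈ A).card + N)
  have hq : (0 : ℝ) < (q : ℝ) + 1 := by positivity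
  have h2 : (N : ℝ) < 1 / ((q : ℝ) + 1) * m := by
    rw [one_div, inv_mul_eq_div, lt_div_iff₀ hq]
    have : N * (q + 1) < m := by rw [hm, mul_comm]; omega
    exact_mod_cast this
  linarith

/-- If a dense set of points lies eventually in the open sets `P i`, then for a residual set of
points the visiting times have upper density one. -/
lemma residual_fullUpper {Y : Type*} [TopologicalSpace Y] (P : ℕ → Set Y)
    (hP : ∀ i, IsOpen (P i)) (hd : Dense {x | ∀ᶠ i in atTop, x ∈ P i}) :
    {x | FullUpper {i | x ∈ P i}} ∈ residual Y := by
  classical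
  have hset : {x | FullUpper {i | x ∈ P i}} = ⋂ q : ℕ, ⋂ M : ℕ, {x | ∃ m : ℕ, M < m ∧
      (1 - 1 / ((q : ℝ) + 1)) * m <
        (((Finset.range m).filter fun i => i ∈ {i | x ∈ P i}).card : ℝ)} := by
    ext x
    simp only [FullUpper, Set.mem_ofPred_eq, Set.mem_iInter]
  rw [hset]
  refine countable_iInter_mem.2 fun q => countable_iInter_mem.2 fun M => ?_
  apply residual_of_dense_open
  · rw [isOpen_iff_mem_nhds]
    rintro x ⟨m, hm, hlt⟩
    -- The visits made by `x` before time `m` are also made by all nearby points.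
    have hn : ∀ᶠ y in 𝓝 x, ∀ i ∈ (Finset.range m).filter fun i => i ∈ {i | x ∈ P i}, y ∈ P i := by
      rw [Finset.eventually_all]
      intro i hi
      exact (hP i).mem_nhds (Finset.mem_filter.1 hi).2
    filter_upwards [hn] with y hy
    refine ⟨m, hm, hlt.trans_le ?_⟩
    have : ((Finset.range m).filter fun i => i ∈ {i | x ∈ P i}) ⊆
        (Finset.range m).filter fun i => i ∈ {i | y ∈ P i} := fun i hi =>
      Finset.mem_filter.2 ⟨(Finset.mem_filter.1 hi).1, hy i hi⟩
    exact_mod_cast Finset.card_le_card this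
  · exact hd.mono fun x hx => fullUpper_of_eventually hx q M

/-! ### Distality of minimal equicontinuous maps -/

lemma iterate_mem {X : Type*} {f : X → X} {Λ : Set X} (hinv : Set.MapsTo f Λ Λ) {x : X}
    (hx : x ∈ Λ) (i : ℕ) : f^[i] x ∈ Λ := hinv.iterate i hx

/-- Arbitrarily late iterates of `f` are uniformly close to the identity on `Λ`. -/
lemma uniform_return {X : Type*} [MetricSpace X] {f : X → X} (hf : Continuous f) {Λ : Set X}
    (hinv : Set.MapsTo f Λ Λ) (hmin : MinimalOn f Λ) (heq : EquicontOnSet f Λ)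
    {η : ℝ} (hη : 0 < η) (N : ℕ) :
    ∃ j, N ≤ j ∧ ∀ w ∈ Λ, dist (f^[j] w) w ≤ η := by
  rcases Λ.eq_empty_or_nonempty with rfl | ⟨z, hz⟩
  · exact ⟨N, le_rfl, fun w hw => hw.elim⟩
  obtain ⟨δ, hδ, hδ'⟩ := heq η hη
  have hz' : z ∈ closure (Set.range fun i : ℕ => f^[i] (f^[N] z)) := by
    rw [hmin _ (iterate_mem hinv hz N)]; exact hz
  obtain ⟨_, ⟨i, rfl⟩, hi⟩ := Metric.mem_closure_iff.1 hz' δ hδ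
  refine ⟨i + N, by omega, ?_⟩
  have hi' : dist (f^[i + N] z) z ≤ δ := by
    rw [Function.iterate_add_apply, dist_comm]; exact hi.le
  -- The estimate holds along the orbit of `z`, which is dense in `Λ`.
  have hcl : IsClosed {w | dist (f^[i + N] w) w ≤ η} :=
    isClosed_le ((hf.iterate _).dist continuous_id) continuous_const
  have hsub : (Set.range fun k : ℕ => f^[k] z) ⊆ {w | dist (f^[i + N] w) w ≤ η} := by
    rintro _ ⟨k, rfl⟩
    have := hδ' _ (iterate_mem hinv hz (i + N)) _ hz hi' k
    simpa only [Set.mem_ofPred_eq, ← Function.iterate_add_apply, add_comm] using this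
  intro w hw
  rw [← hmin z hz] at hw
  exact closure_minimal hsub hcl hw

lemma distal_pair {X : Type*} [MetricSpace X] {f : X → X} (hf : Continuous f) {Λ : Set X}
    (hinv : Set.MapsTo f Λ Λ) (hmin : MinimalOn f Λ) (heq : EquicontOnSet f Λ)
    {z w : X} (hz : z ∈ Λ) (hw : w ∈ Λ) (hne : z ≠ w) :
    ∃ c : ℝ, 0 < c ∧ ∀ i : ℕ, c ≤ dist (f^[i] z) (f^[i] w) := by
  by_contra! hcon
  have hpos := dist_pos.2 hne
  have hη : 0 < dist z w / 4 := by positivity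
  obtain ⟨δ, hδ, hδ'⟩ := heq _ hη
  obtain ⟨i, hi⟩ := hcon δ hδ
  obtain ⟨j, hj, hj'⟩ := uniform_return hf hinv hmin heq hη i
  obtain ⟨k, rfl⟩ := Nat.exists_eq_add_of_le hj
  have h1 := hδ' _ (iterate_mem hinv hz i) _ (iterate_mem hinv hw i) hi.le k
  rw [← Function.iterate_add_apply, ← Function.iterate_add_apply, add_comm k i] at h1
  have h2 := hj' z hz
  have h3 := hj' w hw
  have h4 := dist_triangle4 z (f^[i + k] z) (f^[i + k] w) w
  rw [dist_comm z (f^[i + k] z)] at h4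
  linarith

/-! ### Density of the individual stable sets -/

/-- Points whose orbit is eventually strictly `ε`-close to that of `x`: a form of `Vs` that does
not mention `limsup`. -/
def stableSet {X : Type*} [MetricSpace X] (f : X → X) (x : X) (ε : ℝ) : Set X :=
  {y | ∀ᶠ i in atTop, dist (f^[i] x) (f^[i] y) < ε}

lemma Vs_subset_stableSet {X : Type*} [MetricSpace X] [CompactSpace X] (f : X → X) (x : X)
    {ε ε' : ℝ} (h : ε < ε') : Vs f x ε ⊆ stableSet f x ε' := by
  intro y hy
  refine eventually_lt_of_limsup_lt (lt_of_le_of_lt hy h) ?_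
  exact isBoundedUnder_of ⟨Metric.diam (Set.univ : Set X), fun i =>
    Metric.dist_le_diam_of_mem isCompact_univ.isBounded (Set.mem_univ _) (Set.mem_univ _)⟩

lemma stableSet_subset {X : Type*} [MetricSpace X] {f : X → X} {x x' : X} {ε η : ℝ}
    (h : ∀ i, dist (f^[i] x') (f^[i] x) ≤ η) : stableSet f x ε ⊆ stableSet f x' (η + ε) := by
  intro y hy
  filter_upwards [hy] with i hi
  linarith [dist_triangle (f^[i] x') (f^[i] x) (f^[i] y), h i]

lemma iterate_mem_stableSet {X : Type*} [MetricSpace X] {f : X → X} {x y : X} {ε : ℝ}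
    (h : y ∈ stableSet f x ε) (k : ℕ) : f^[k] y ∈ stableSet f (f^[k] x) ε := by
  have := (tendsto_add_atTop_nat k).eventually h
  filter_upwards [this] with i hi
  simpa only [← Function.iterate_add_apply] using hi

/-- Some stable set of a point of `Λ` is dense in a non-empty open set. -/
lemma exists_somewhere_dense {X : Type*} [MetricSpace X] [CompactSpace X] {f : X → X} {Λ : Set X}
    (hclosed : IsClosed Λ) (hne : Λ.Nonempty) (heq : EquicontOnSet f Λ)
    (hunion : ∀ ε : ℝ, 0 < ε → Dense (⋃ x ∈ Λ, Vs f x ε)) {ε : ℝ} (hε : 0 < ε) :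
    ∃ p ∈ Λ, (interior (closure (stableSet f p ε))).Nonempty := by
  obtain ⟨δ, hδ, hδ'⟩ := heq (ε / 2) (by positivity)
  obtain ⟨t, htΛ, htf, ht⟩ := hclosed.isCompact.finite_cover_balls hδ
  have hd : Dense (⋃ p ∈ t, stableSet f p ε) := by
    refine (hunion (ε / 4) (by positivity)).mono ?_
    intro y hy
    simp only [Set.mem_iUnion] at hy ⊢
    obtain ⟨x, hx, hy⟩ := hy
    obtain ⟨p, hp, hxp⟩ : ∃ p ∈ t, x ∈ Metric.ball p δ := by simpa using ht hx
    refine ⟨p, hp, ?_⟩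
    have h1 := Vs_subset_stableSet f x (by linarith : ε / 4 < ε / 2) hy
    have h2 := stableSet_subset (ε := ε / 2)
      (hδ' p (htΛ hp) x hx (by rw [dist_comm]; exact (Metric.mem_ball.1 hxp).le)) h1
    rwa [add_halves] at h2
  have hcov : ⋃ p ∈ t, closure (stableSet f p ε) = Set.univ := by
    rw [← htf.closure_biUnion, hd.closure_eq]
  have : Nonempty X := ⟨hne.some⟩
  have := htf.countable.to_subtype
  obtain ⟨⟨p, hp⟩, h⟩ := nonempty_interior_of_iUnion_of_closed
    (f := fun p : t => closure (stableSet f p.1 ε)) (fun _ => isClosed_closure)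
    (by rw [← hcov, Set.biUnion_eq_iUnion])
  exact ⟨p, htΛ hp, h⟩

lemma restrict_iterate_coe {X : Type*} {f : X → X} {Λ : Set X} (hinv : Set.MapsTo f Λ Λ)
    (i : ℕ) (x : Λ) : (((Set.MapsTo.restrict f Λ Λ hinv)^[i] x : Λ) : X) = f^[i] x := by
  rw [Set.MapsTo.iterate_restrict]; rfl

lemma dense_stableSet {X : Type*} [MetricSpace X] [CompactSpace X]
    {f : X → X} (hf : Continuous f) {Λ : Set X}
    (hclosed : IsClosed Λ) (hinv : Set.MapsTo f Λ Λ) (heq : EquicontOnSet f Λ)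
    (hunion : ∀ ε : ℝ, 0 < ε → Dense (⋃ x ∈ Λ, Vs f x ε))
    (htrans : IsTransitive (Prod.map (Set.MapsTo.restrict f Λ Λ hinv) f))
    {z : X} (hz : z ∈ Λ) {ε : ℝ} (hε : 0 < ε) : Dense (stableSet f z ε) := by
  obtain ⟨p, hp, hO⟩ := exists_somewhere_dense hclosed ⟨z, hz⟩ heq hunion
    (by positivity : 0 < ε / 2)
  obtain ⟨δ₁, hδ₁, hδ₁'⟩ := heq (ε / 2) (by positivity)
  obtain ⟨δ₂, hδ₂, hδ₂'⟩ := heq (δ₁ / 2) (by positivity)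
  rw [dense_iff_inter_open]
  intro W hW hWne
  obtain ⟨i, ⟨q, y⟩, ⟨hq, hy⟩, h⟩ := htrans
    (Metric.ball (⟨p, hp⟩ : Λ) δ₂ ×ˢ interior (closure (stableSet f p (ε / 2))))
    (Metric.ball (⟨z, hz⟩ : Λ) (δ₁ / 2) ×ˢ W)
    (Metric.isOpen_ball.prod isOpen_interior) (Metric.isOpen_ball.prod hW)
    (Set.Nonempty.prod ⟨_, Metric.mem_ball_self hδ₂⟩ hO)
    (Set.Nonempty.prod ⟨_, Metric.mem_ball_self (by positivity)⟩ hWne)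
  rw [Prod.map_iterate] at h
  obtain ⟨hqz, hyW⟩ := h
  simp only [Prod.map_fst, Prod.map_snd] at hqz hyW
  have hqz' : dist (f^[i] q) z < δ₁ / 2 := by
    rw [Metric.mem_ball, Subtype.dist_eq, restrict_iterate_coe] at hqz
    exact hqz
  have hpq : dist (f^[i] q) (f^[i] p) ≤ δ₁ / 2 := by
    rw [Metric.mem_ball, Subtype.dist_eq] at hq
    exact hδ₂' q q.2 p hp hq.le i
  have hzp : dist z (f^[i] p) ≤ δ₁ := by
    linarith [dist_triangle_left z (f^[i] p) (f^[i] q)]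
  -- Points of the stable set of `p` near `y` are also carried into `W` by `f^i`.
  obtain ⟨y', hy'W, hy'⟩ := mem_closure_iff.1 (interior_subset hy) (f^[i] ⁻¹' W)
    (hW.preimage (hf.iterate i)) hyW
  refine ⟨f^[i] y', hy'W, ?_⟩
  have := stableSet_subset (hδ₁' z hz _ (iterate_mem hinv hp i) hzp)
    (iterate_mem_stableSet hy' i)
  rwa [add_halves] at this

/-! ### Scrambled tuples -/

lemma exists_separated_tuple {X : Type*} [MetricSpace X] {f : X → X} (hf : Continuous f)
    {Λ : Set X} (hinv : Set.MapsTo f Λ Λ) (hmin : MinimalOn f Λ) (heq : EquicontOnSet f Λ)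
    {n : ℕ} (hn : (n : Cardinal) < Cardinal.mk Λ + 1) :
    ∃ z : Fin n → X, (∀ j, z j ∈ Λ) ∧ ∃ c : ℝ, 0 < c ∧
      ∀ j k : Fin n, j < k → ∀ i : ℕ, c ≤ dist (f^[i] (z j)) (f^[i] (z k)) := by
  have hle : (n : Cardinal) ≤ Cardinal.mk Λ := by
    by_contra! hlt
    obtain ⟨m, hm⟩ := Cardinal.lt_aleph0.1 (hlt.trans (Cardinal.natCast_lt_aleph0))
    rw [hm] at hlt hn
    have h1 : m < n := by exact_mod_cast hlt
    have h2 : n < m + 1 := by exact_mod_cast hn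
    omega
  obtain ⟨e⟩ : Nonempty (Fin n ↪ Λ) := by
    rw [← Cardinal.lift_mk_le']
    simpa using hle
  refine ⟨fun j => e j, fun j => (e j).2, ?_⟩
  have hev : ∀ᶠ c in 𝓝[>] (0 : ℝ), ∀ j k : Fin n, j < k →
      ∀ i : ℕ, c ≤ dist (f^[i] (e j : X)) (f^[i] (e k : X)) := by
    simp only [eventually_all]
    intro j k hjk
    obtain ⟨c, hc, hc'⟩ := distal_pair hf hinv hmin heq (e j).2 (e k).2
      (fun h => hjk.ne (e.injective (Subtype.ext h)))
    filter_upwards [Ioc_mem_nhdsGT hc] with c' hc'' i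
    exact hc''.2.trans (hc' i)
  obtain ⟨c, hc, hpos⟩ := (hev.and self_mem_nhdsWithin).exists
  exact ⟨c, hpos, hc⟩

/-- Theorem 1.1: if `f|_Λ` is minimal and equicontinuous, the union of the
`V_ε^s(x)`, `x ∈ Λ`, is dense for every `ε > 0`, and `f|_Λ × f` is transitive, then for each
`2 ≤ n < |Λ| + 1` the set of DC1-`n`-`δₙ`-scrambled tuples is residual in `Xⁿ`. -/
theorem dc1_main {X : Type*} [MetricSpace X] [CompactSpace X]
    (f : X → X) (hf : Continuous f) (Λ : Set X)
    (hclosed : IsClosed Λ) (hinv : Set.MapsTo f Λ Λ)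
    (hmin : MinimalOn f Λ) (heq : EquicontOnSet f Λ)
    (hunion : ∀ ε : ℝ, 0 < ε → Dense (⋃ x ∈ Λ, Vs f x ε))
    (htrans : IsTransitive (Prod.map (Set.MapsTo.restrict f Λ Λ hinv) f)) :
    ∀ n : ℕ, 2 ≤ n → (n : Cardinal) < Cardinal.mk Λ + 1 →
      ∃ δ : ℝ, 0 < δ ∧ {x : Fin n → X | DC1Scrambled f δ x} ∈ residual (Fin n → X) := by
  intro n hn2 hn
  obtain ⟨z, hz, c, hc, hsep⟩ := exists_separated_tuple hf hinv hmin heq hn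
  have hdense : ∀ (w : Fin n → X), (∀ j, w j ∈ Λ) → ∀ ε : ℝ, 0 < ε →
      Dense {x : Fin n → X | ∀ᶠ i in atTop, ∀ j, dist (f^[i] (w j)) (f^[i] (x j)) < ε} := by
    intro w hw ε hε
    refine (dense_pi Set.univ (s := fun j => stableSet f (w j) ε) fun j _ =>
      dense_stableSet hf hclosed hinv heq hunion htrans (hw j) hε).mono fun x hx => ?_
    exact eventually_all.2 fun j => hx j (Set.mem_univ j)
  have hcont : ∀ (i : ℕ) (j k : Fin n),
      Continuous fun x : Fin n → X => dist (f^[i] (x j)) (f^[i] (x k)) := fun i j k =>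
    ((hf.iterate i).comp (continuous_apply j)).dist ((hf.iterate i).comp (continuous_apply k))
  have hfar : {x : Fin n → X | FullUpper {i | x ∈ {x : Fin n → X | ∀ j k : Fin n, j < k →
      c / 2 < dist (f^[i] (x j)) (f^[i] (x k))}}} ∈ residual (Fin n → X) := by
    apply residual_fullUpper
    · intro i
      simp only [Set.ofPred_forall]
      exact isOpen_iInter_of_finite fun j => isOpen_iInter_of_finite fun k =>
        isOpen_iInter_of_finite fun _ => isOpen_lt continuous_const (hcont i j k)
    · refine (hdense z hz (c / 4) (by positivity)).mono fun x hx => ?_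
      filter_upwards [hx] with i hi j k hjk
      have h1 := dist_triangle4 (f^[i] (z j)) (f^[i] (x j)) (f^[i] (x k)) (f^[i] (z k))
      rw [dist_comm (f^[i] (x k)) (f^[i] (z k))] at h1
      linarith [hi j, hi k, hsep j k hjk i]
  have hnear : ∀ r : ℕ, {x : Fin n → X | FullUpper {i | x ∈ {x : Fin n → X | ∀ j k : Fin n, j < k →
      dist (f^[i] (x j)) (f^[i] (x k)) < 1 / ((r : ℝ) + 1)}}} ∈ residual (Fin n → X) := by
    intro r
    apply residual_fullUpper
    · intro i
      simp only [Set.ofPred_forall]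
      exact isOpen_iInter_of_finite fun j => isOpen_iInter_of_finite fun k =>
        isOpen_iInter_of_finite fun _ => isOpen_lt (hcont i j k) continuous_const
    · have hr : (0 : ℝ) < 1 / ((r : ℝ) + 1) := by positivity
      -- All coordinates shadow the same point of `Λ`.
      have j₀ : Fin n := ⟨0, by omega⟩
      refine (hdense (fun _ => z j₀) (fun _ => hz j₀) _ (half_pos hr)).mono fun x hx => ?_
      filter_upwards [hx] with i hi j k _
      linarith [hi j, hi k, dist_triangle_left (f^[i] (x j)) (f^[i] (x k)) (f^[i] (z j₀))]
  refine ⟨c / 2, by positivity, ?_⟩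
  filter_upwards [hfar, countable_iInter_mem.2 hnear] with x hx1 hx2
  refine ⟨by convert hx1.limsup_eq; exact Iff.rfl, fun ε hε => ?_⟩
  obtain ⟨r, hr⟩ := exists_nat_one_div_lt hε
  have h := (Set.mem_iInter.1 hx2 r : FullUpper _).mono (B := {i | ∀ j k : Fin n, j < k →
    dist (f^[i] (x j)) (f^[i] (x k)) < ε}) fun i hi j k hjk => (hi j k hjk).trans hr
  convert h.limsup_eq
  exact Iff.rfl
end

section
/- Let X be a compact metric space, f : X → X a continuous map, and Λ ⊆ X a closed f-invariant subset such that f|_Λ : Λ → Λ is minimal and equicontinuous. Then for every Furstenberg family 𝓕, if Λ ∩ R(f,𝓕) ≠ ∅ then Λ ⊆ R(f,𝓕). -/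
/-!
Let `x ∈ Λ` be `F`-recurrent, `y ∈ Λ` and `ε > 0`, and let `δ` be the modulus of equicontinuity for
`ε / 3`. By minimality some `f^[n] x` lies within `min δ (ε / 3)` of `y`. Every `δ`-return time `i`
of `x` is then an `ε`-return time of `y`, by the triangle inequality along
`y, f^[n] x, f^[i] (f^[n] x), f^[i] y`. Hence `retTimes f x δ ⊆ retTimes f y ε`, and `F` is
hereditary upward.
-/

open Filter Topology

/-- Lemma 1.2: for `f|_Λ` minimal and equicontinuous,
`Λ ∩ R(f,𝓕) ≠ ∅` implies `Λ ⊆ R(f,𝓕)`. -/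
theorem recurrent_of_minimal_equicontinuous {X : Type*} [MetricSpace X] [CompactSpace X]
    (f : X → X) (hf : Continuous f) (Λ : Set X)
    (hclosed : IsClosed Λ) (hinv : Set.MapsTo f Λ Λ)
    (hmin : MinimalOn f Λ) (heq : EquicontOnSet f Λ)
    (F : Set (Set ℕ))
    (hup : ∀ A B : Set ℕ, A ∈ F → A ⊆ B → B ∈ F)
    (hne : F.Nonempty) (hproper : F ≠ Set.univ)
    (hrec : (Λ ∩ FRecurrent f F).Nonempty) :
    Λ ⊆ FRecurrent f F := by
  obtain ⟨x, hxΛ, hx⟩ := hrec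
  intro y hyΛ ε hε
  obtain ⟨δ, hδ, hδε⟩ := heq (ε / 3) (by positivity)
  have hiter : ∀ n : ℕ, ∀ z ∈ Λ, f^[n] z ∈ Λ := fun n z hz => hinv.iterate n hz
  have hy : y ∈ closure (Set.range fun i : ℕ => f^[i] x) := by
    rw [hmin x hxΛ]; exact hyΛ
  obtain ⟨_, ⟨n, rfl⟩, hn⟩ := Metric.mem_closure_iff.1 hy (min δ (ε / 3)) (by positivity)
  simp only at hn
  have hnδ : dist (f^[n] x) y ≤ δ := by
    rw [dist_comm]; exact hn.le.trans (min_le_left _ _)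
  have hnε : dist y (f^[n] x) ≤ ε / 3 := hn.le.trans (min_le_right _ _)
  refine hup _ _ (hx δ hδ) fun i (hi : dist x (f^[i] x) ≤ δ) => ?_
  have hmid : dist (f^[n] x) (f^[i] (f^[n] x)) ≤ ε / 3 := by
    -- `f^[i]` and `f^[n]` commute, so this is the return `dist x (f^[i] x) ≤ δ` pushed by `f^[n]`.
    rw [← Function.iterate_add_apply, add_comm, Function.iterate_add_apply]
    exact hδε x hxΛ _ (hiter i x hxΛ) hi n
  have hlast := hδε _ (hiter n x hxΛ) y hyΛ hnδ i
  change dist y (f^[i] y) ≤ ε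
  linarith [dist_triangle4 y (f^[n] x) (f^[i] (f^[n] x)) (f^[i] y)]
end

section
/- Let f : X → X and g : Y → Y be continuous self-maps of compact metric spaces X and Y, and let 𝓕 be a Furstenberg family. If f is Δ(𝓕)*-transitive, and g is transitive with Y = R(g,𝓕), then the product map f × g : X × Y → X × Y is transitive. -/
/-!
Let `U₁ × V₁` and `U₂ × V₂` be nonempty open boxes. Transitivity of `g` gives `n` such that
`W = V₁ ∩ g⁻ⁿ(V₂)` is nonempty. If `y ∈ W` and `A = N(y, ε)` is a set of return times keeping the
orbit of `y` inside `W`, then for `j ≤ k` in `A` the point `gʲ y ∈ W` is sent by `gᵏ⁻ʲ` into `W`, so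
`Δ(A) + n ⊆ N(V₁, V₂)`. Since `A ∈ 𝓕`, the set `N(U₁, f⁻ⁿ(U₂))` meets `Δ(A)`, at `i` say, and then
`i + n` is the required time.

This needs `f⁻ⁿ(U₂)` to be nonempty, which holds because a transitive map of a compact Hausdorff
space is surjective (`IsTransitive.surjective`).
-/

open Filter Topology

/-- A point `p` outside the closed range of `f` could be reached only at time `0`; as `f p ≠ p`,
small neighbourhoods of `f p` and `p` are disjoint and contradict transitivity. -/
theorem IsTransitive.surjective {X : Type*} [TopologicalSpace X] [T2Space X] [CompactSpace X]
    {f : X → X} (hf : Continuous f) (h : IsTransitive f) : Function.Surjective f := by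
  intro p
  by_contra hp
  have hne : f p ≠ p := fun e => hp ⟨p, e⟩
  obtain ⟨A, B, hA, hB, hfA, hpB, hAB⟩ := t2_separation hne
  have hcl : IsClosed (Set.range f) := (isCompact_range hf).isClosed
  obtain ⟨i, z, hzA, hzB, hzV⟩ := h A (B ∩ (Set.range f)ᶜ) hA (hB.inter hcl.isOpen_compl)
    ⟨f p, hfA⟩ ⟨p, hpB, hp⟩
  cases i with
  | zero => exact Set.disjoint_left.mp hAB hzA hzB
  | succ i => exact hzV ⟨f^[i] z, (Function.iterate_succ_apply' f i z).symm⟩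

/-- `Δ(𝓕)` contains `ℕ₀` whenever `𝓕` is nonempty and hereditary upward, so members of its dual are
nonempty. -/
theorem FTransitive.isTransitive_of_deltaDual {X : Type*} [TopologicalSpace X] {f : X → X}
    {F : Set (Set ℕ)} (hup : ∀ A B : Set ℕ, A ∈ F → A ⊆ B → B ∈ F) (hne : F.Nonempty)
    (h : FTransitive f (dualFamily (deltaFamily F))) : IsTransitive f := by
  intro U V hU hV hUn hVn
  obtain ⟨A, hA⟩ := hne
  obtain ⟨i, hi, -⟩ := h U V hU hV hUn hVn Set.univ
    ⟨Set.univ, hup A _ hA (Set.subset_univ _), trivial, Set.subset_univ _⟩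
  exact ⟨i, hi⟩

/-- Lemma 1.3: if `f` is `Δ(𝓕)*`-transitive and `g` is transitive with
`Y = R(g,𝓕)`, then `f × g` is transitive. -/
theorem prod_transitive_of_deltaDual_transitive
    {X : Type*} [MetricSpace X] [CompactSpace X]
    {Y : Type*} [MetricSpace Y] [CompactSpace Y]
    (f : X → X) (g : Y → Y) (hf : Continuous f) (hg : Continuous g)
    (F : Set (Set ℕ))
    (hup : ∀ A B : Set ℕ, A ∈ F → A ⊆ B → B ∈ F)
    (hne : F.Nonempty) (hproper : F ≠ Set.univ)
    (hftrans : FTransitive f (dualFamily (deltaFamily F)))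
    (hgtrans : IsTransitive g)
    (hgrec : ∀ y : Y, y ∈ FRecurrent g F) :
    IsTransitive (Prod.map f g) := by
  intro U V hU hV hUn hVn
  obtain ⟨⟨a, b⟩, hab⟩ := hUn
  obtain ⟨⟨c, d⟩, hcd⟩ := hVn
  obtain ⟨U₁, V₁, hU₁, hV₁, ha, hb, hUsub⟩ := isOpen_prod_iff.mp hU a b hab
  obtain ⟨U₂, V₂, hU₂, hV₂, hc, hd, hVsub⟩ := isOpen_prod_iff.mp hV c d hcd
  have hsurj : Function.Surjective f := (hftrans.isTransitive_of_deltaDual hup hne).surjective hf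
  obtain ⟨n, y, hyV₁, hyV₂⟩ := hgtrans V₁ V₂ hV₁ hV₂ ⟨b, hb⟩ ⟨d, hd⟩
  have hW : IsOpen (V₁ ∩ g^[n] ⁻¹' V₂) := hV₁.inter (hV₂.preimage (hg.iterate n))
  obtain ⟨ε, hε, hball⟩ := Metric.nhds_basis_closedBall.mem_iff.mp
    (hW.mem_nhds (show y ∈ V₁ ∩ g^[n] ⁻¹' V₂ from ⟨hyV₁, hyV₂⟩))
  have hret : ∀ j ∈ retTimes g y ε, g^[j] y ∈ V₁ ∩ g^[n] ⁻¹' V₂ := fun j hj =>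
    hball (Metric.mem_closedBall'.mpr hj)
  obtain ⟨q, hq⟩ := hsurj.iterate n c
  obtain ⟨i, ⟨x, hx, hxi⟩, j, hj, k, hk, hjk, rfl⟩ :=
    hftrans U₁ (f^[n] ⁻¹' U₂) hU₁ (hU₂.preimage (hf.iterate n)) ⟨a, ha⟩
      ⟨q, by simpa [hq] using hc⟩ (deltaSet (retTimes g y ε))
      ⟨_, hgrec y ε hε, by simp [retTimes, hε.le], subset_rfl⟩
  refine ⟨n + (k - j), (x, g^[j] y), hUsub ⟨hx, (hret j hj).1⟩, hVsub ?_⟩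
  rw [Prod.map_iterate]
  refine ⟨?_, ?_⟩
  · simpa [Function.iterate_add_apply] using hxi
  · have h := (hret k hk).2
    have e : g^[k] y = g^[k - j] (g^[j] y) := by
      rw [← Function.iterate_add_apply, Nat.sub_add_cancel hjk]
    simpa [Function.iterate_add_apply, e] using h
end

section
/- Let X be a compact metric space, f : X → X a continuous map, and Λ ⊆ X a closed f-invariant subset such that f|_Λ : Λ → Λ is minimal and equicontinuous. Then for every ε > 0, if ⋃_{x∈Λ} V_ε^s(x) is dense in X, then X = ⋃_{x∈Λ} closure(V_{2ε}^s(x)). -/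
/-!
Let `y : X`. By density, `y` is the limit of points `z n ∈ Vs f (x n) ε` with `x n ∈ Λ`, and by
compactness of `Λ` a subsequence of `x n` converges to some `x₀ ∈ Λ`. By equicontinuity the orbits
of `x n` and `x₀` stay `ε`-close for all time once `n` is large along the subsequence, so
the triangle inequality (`mem_Vs_add_of_forall_dist_le`) puts `z n` in `Vs f x₀ (2 * ε)`; hence `y`
lies in the closure of that set.
-/

open Filter Topology

/-- Moving the base point `x` to a point `x'` whose whole forward orbit is `η`-close enlarges the
radius by at most `η`. Compactness bounds the distances, so that the real-valued `limsup` is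
meaningful. -/
lemma mem_Vs_add_of_forall_dist_le {X : Type*} [MetricSpace X] [CompactSpace X] {f : X → X}
    {x x' z : X} {η ε : ℝ} (h : ∀ i : ℕ, dist (f^[i] x') (f^[i] x) ≤ η) (hz : z ∈ Vs f x ε) :
    z ∈ Vs f x' (η + ε) := by
  have hbdd : IsBoundedUnder (· ≤ ·) atTop (fun i : ℕ => dist (f^[i] x) (f^[i] z)) :=
    isBoundedUnder_of ⟨Metric.diam (Set.univ : Set X), fun i =>
      Metric.dist_le_diam_of_mem isCompact_univ.isBounded (Set.mem_univ _) (Set.mem_univ _)⟩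
  have hcobdd : IsCoboundedUnder (· ≤ ·) atTop (fun i : ℕ => dist (f^[i] x') (f^[i] z)) :=
    (isBoundedUnder_of ⟨0, fun _ => dist_nonneg⟩ :
      IsBoundedUnder (· ≥ ·) atTop _).isCoboundedUnder_le
  change limsup (fun i : ℕ => dist (f^[i] x') (f^[i] z)) atTop ≤ η + ε
  refine le_of_forall_pos_le_add fun r hr => limsup_le_of_le hcobdd ?_
  have hlt : limsup (fun i : ℕ => dist (f^[i] x) (f^[i] z)) atTop < ε + r :=
    lt_of_le_of_lt hz (by linarith)
  filter_upwards [eventually_lt_of_limsup_lt hlt hbdd] with i hi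
  linarith [h i, dist_triangle (f^[i] x') (f^[i] x) (f^[i] z)]

/-- Lemma 2.1: with `f|_Λ` minimal and equicontinuous, if `⋃_{x∈Λ} V_ε^s(x)`
is dense, then `X = ⋃_{x∈Λ} closure (V_{2ε}^s(x))`. -/
theorem union_closure_eq_univ {X : Type*} [MetricSpace X] [CompactSpace X]
    (f : X → X) (hf : Continuous f) (Λ : Set X)
    (hclosed : IsClosed Λ) (hinv : Set.MapsTo f Λ Λ)
    (hmin : MinimalOn f Λ) (heq : EquicontOnSet f Λ) :
    ∀ ε : ℝ, 0 < ε → Dense (⋃ x ∈ Λ, Vs f x ε) →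
      (⋃ x ∈ Λ, closure (Vs f x (2 * ε))) = Set.univ := by
  intro ε hε hdense
  rw [Set.eq_univ_iff_forall]
  intro y
  obtain ⟨z, hz, hzy⟩ := mem_closure_iff_seq_limit.1 (hdense y)
  simp only [Set.mem_iUnion, exists_prop] at hz
  choose x hxΛ hzV using hz
  obtain ⟨x₀, hx₀, φ, hφ, hlim⟩ := hclosed.isCompact.tendsto_subseq hxΛ
  obtain ⟨δ, hδ, hδε⟩ := heq ε hε
  simp only [Set.mem_iUnion, exists_prop]
  refine ⟨x₀, hx₀, mem_closure_of_tendsto (hzy.comp hφ.tendsto_atTop) ?_⟩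
  filter_upwards [Metric.tendsto_nhds.1 hlim δ hδ] with n hn
  rw [two_mul]
  refine mem_Vs_add_of_forall_dist_le (fun i => ?_) (hzV (φ n))
  exact hδε _ hx₀ _ (hxΛ _) (by rw [dist_comm]; exact hn.le) i
end

section
/- Let X be a compact metric space, f : X → X a continuous map, and Λ ⊆ X a closed f-invariant subset such that f|_Λ : Λ → Λ is minimal and equicontinuous. For any x ∈ Λ and ε > 0, if the closure of V_ε^s(x) has non-empty interior, and if the product map f|_Λ × f : Λ × X → Λ × X is transitive, then V_{2ε}^s(x) is dense in X. -/
/-!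
Write `U` for the interior of the closure of `V_ε^s(x)`, and let `O` be non-empty and open.
Transitivity of `f|_Λ × f`, applied to small balls about `x` in the first factor and to `U`, `O`
in the second, gives a time `i` with `f^i(U) ∩ O ≠ ∅` at which some point of `Λ` near `x` returns
near `x`. By equicontinuity `f^i(x)` is then so close to `x` that the orbits of `x` and `f^i(x)`
stay `ε`-close forever. As `V_ε^s(x)` is dense in `U`, some `y ∈ V_ε^s(x)` has `f^i(y) ∈ O`, and
the triangle inequality through the orbit of `f^i(x)` gives `f^i(y) ∈ V_{2ε}^s(x)`.
-/

open Filter Topology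

/-- Elementary form of membership in `V_ε^s(x)`; compactness makes the real-valued `limsup`
meaningful, since the distances are bounded. -/
lemma mem_Vs_iff {X : Type*} [MetricSpace X] [CompactSpace X] (f : X → X) (x y : X) (ε : ℝ) :
    y ∈ Vs f x ε ↔ ∀ η > 0, ∀ᶠ i : ℕ in atTop, dist (f^[i] x) (f^[i] y) < ε + η := by
  have hb : IsBoundedUnder (· ≤ ·) atTop (fun i : ℕ => dist (f^[i] x) (f^[i] y)) :=
    isBoundedUnder_of ⟨Metric.diam (Set.univ : Set X), fun i =>
      Metric.dist_le_diam_of_mem isCompact_univ.isBounded (Set.mem_univ _) (Set.mem_univ _)⟩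
  have hc : IsCoboundedUnder (· ≤ ·) atTop (fun i : ℕ => dist (f^[i] x) (f^[i] y)) :=
    (isBoundedUnder_of ⟨0, fun i => dist_nonneg⟩ :
      IsBoundedUnder (· ≥ ·) atTop _).isCoboundedUnder_le
  constructor
  · intro h η hη
    have h' : limsup (fun i : ℕ => dist (f^[i] x) (f^[i] y)) atTop ≤ ε := h
    exact eventually_lt_of_limsup_lt (by linarith) hb
  · intro h
    change limsup (fun i : ℕ => dist (f^[i] x) (f^[i] y)) atTop ≤ ε
    exact le_of_forall_pos_le_add fun η hη =>
      limsup_le_of_le hc ((h η hη).mono fun i hi => hi.le)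

/-- Lemma 2.3: with `f|_Λ` minimal and equicontinuous, if the closure of
`V_ε^s(x)` has nonempty interior for some `x ∈ Λ`, and `f|_Λ × f` is transitive, then
`V_{2ε}^s(x)` is dense. -/
theorem dense_of_interior_nonempty {X : Type*} [MetricSpace X] [CompactSpace X]
    (f : X → X) (hf : Continuous f) (Λ : Set X)
    (hclosed : IsClosed Λ) (hinv : Set.MapsTo f Λ Λ)
    (hmin : MinimalOn f Λ) (heq : EquicontOnSet f Λ)
    (x : X) (hx : x ∈ Λ) (ε : ℝ) (hε : 0 < ε)
    (hint : (interior (closure (Vs f x ε))).Nonempty)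
    (htrans : IsTransitive (Prod.map (Set.MapsTo.restrict f Λ Λ hinv) f)) :
    Dense (Vs f x (2 * ε)) := by
  rw [dense_iff_inter_open]
  intro O hO hOne
  obtain ⟨δ, hδ, hδε⟩ := heq ε hε
  obtain ⟨δ', hδ', hδδ'⟩ := heq (δ / 2) (by positivity)
  obtain ⟨i, ⟨z, u⟩, ⟨hz, hu⟩, hV⟩ := htrans
    (Metric.ball ⟨x, hx⟩ δ' ×ˢ interior (closure (Vs f x ε)))
    (Metric.ball ⟨x, hx⟩ (δ / 2) ×ˢ O)
    (Metric.isOpen_ball.prod isOpen_interior) (Metric.isOpen_ball.prod hO)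
    (Set.Nonempty.prod ⟨_, Metric.mem_ball_self hδ'⟩ hint)
    (Set.Nonempty.prod ⟨_, Metric.mem_ball_self (by positivity)⟩ hOne)
  rw [Prod.map_iterate] at hV
  obtain ⟨hzi, hui⟩ := hV
  have hz1 : dist (z : X) x < δ' := hz
  have hz2 : dist (f^[i] z) x < δ / 2 := by
    have h : dist (((Set.MapsTo.restrict f Λ Λ hinv)^[i] z : Λ) : X) x < δ / 2 := hzi
    rwa [Set.MapsTo.iterate_restrict] at h
  have hxi : dist x (f^[i] x) ≤ δ := by
    have h1 := hδδ' z z.2 x hx hz1.le i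
    have h2 := dist_triangle_left x (f^[i] x) (f^[i] z)
    linarith
  have horb := hδε x hx _ (hinv.iterate i hx) hxi
  -- The part of `U` that `f^i` sends into `O` is open and non-empty, so it meets `V_ε^s(x)`.
  obtain ⟨y, ⟨-, hyO⟩, hyV⟩ := mem_closure_iff.1 (interior_subset hu)
    (interior (closure (Vs f x ε)) ∩ f^[i] ⁻¹' O)
    (isOpen_interior.inter (hO.preimage (hf.iterate i))) ⟨hu, hui⟩
  refine ⟨f^[i] y, hyO, (mem_Vs_iff ..).2 fun η hη => ?_⟩
  have hev := (tendsto_add_atTop_nat i).eventually ((mem_Vs_iff ..).1 hyV η hη)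
  filter_upwards [hev] with j hj
  rw [Function.iterate_add_apply, Function.iterate_add_apply] at hj
  have h1 := horb j
  have h2 := dist_triangle (f^[j] x) (f^[j] (f^[i] x)) (f^[j] (f^[i] y))
  linarith
end

section
/- Let X be a compact metric space, f : X → X a continuous map, and Λ ⊆ X a closed f-invariant subset such that f|_Λ : Λ → Λ is minimal and equicontinuous. Let x, y ∈ Λ and ε > 0. If V_ε^s(x) is dense in X and f is surjective, then V_{2ε}^s(y) is dense in X. -/
/-!
By minimality some iterate `f^[m] x` is so close to `y` that, by equicontinuity, the two forward
orbits stay within `ε` forever. If `z ∈ V_ε^s(x)` then `f^[m] z ∈ V_ε^s(f^[m] x)`, hence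
`f^[m] z ∈ V_{2ε}^s(y)`. So `V_{2ε}^s(y)` contains the image of the dense set `V_ε^s(x)` under the
continuous surjection `f^[m]`, and such an image is dense.
-/

open Filter Topology

/-- Lemma 2.4: with `f|_Λ` minimal and equicontinuous, `x, y ∈ Λ`, if
`V_ε^s(x)` is dense and `f` is surjective, then `V_{2ε}^s(y)` is dense. -/
theorem dense_transfer {X : Type*} [MetricSpace X] [CompactSpace X]
    (f : X → X) (hf : Continuous f) (Λ : Set X)
    (hclosed : IsClosed Λ) (hinv : Set.MapsTo f Λ Λ)
    (hmin : MinimalOn f Λ) (heq : EquicontOnSet f Λ)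
    (x y : X) (hx : x ∈ Λ) (hy : y ∈ Λ) (ε : ℝ) (hε : 0 < ε)
    (hdense : Dense (Vs f x ε)) (hsurj : Function.Surjective f) :
    Dense (Vs f y (2 * ε)) := by
  obtain ⟨δ, hδ, hδε⟩ := heq ε hε
  have hyc : y ∈ closure (Set.range fun i : ℕ => f^[i] x) := by rw [hmin x hx]; exact hy
  obtain ⟨_, ⟨m, rfl⟩, hm⟩ := Metric.mem_closure_iff.1 hyc δ hδ
  have himg : Dense (f^[m] '' Vs f x ε) :=
    (hsurj.iterate m).denseRange.dense_image (hf.iterate m) hdense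
  refine himg.mono ?_
  rintro _ ⟨z, hz, rfl⟩
  simp only [Vs, Set.mem_setOf_eq] at hz ⊢
  -- Distances in a compact space are bounded, so the real-valued limsups are not junk values.
  have hbdd : ∀ a b : X, IsBoundedUnder (· ≤ ·) atTop
      (fun i : ℕ => dist (f^[i] a) (f^[i] b)) := fun a b =>
    isBoundedUnder_of ⟨Metric.diam (Set.univ : Set X), fun i =>
      Metric.dist_le_diam_of_mem isCompact_univ.isBounded (Set.mem_univ _) (Set.mem_univ _)⟩
  have hcobdd : ∀ a b : X, IsCoboundedUnder (· ≤ ·) atTop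
      (fun i : ℕ => dist (f^[i] a) (f^[i] b)) := fun a b =>
    (isBoundedUnder_of ⟨0, fun _ => dist_nonneg⟩ :
      IsBoundedUnder (· ≥ ·) atTop _).isCoboundedUnder_le
  refine le_of_forall_pos_le_add fun η hη => ?_
  have hev : ∀ᶠ i : ℕ in atTop, dist (f^[i] x) (f^[i] z) < ε + η :=
    eventually_lt_of_limsup_lt (by linarith) (hbdd x z)
  refine limsup_le_of_le (hcobdd _ _) ?_
  filter_upwards [(tendsto_add_atTop_nat m).eventually hev] with i hi
  have hclose := hδε y hy (f^[m] x) (hinv.iterate m hx) hm.le i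
  rw [Function.iterate_add_apply, Function.iterate_add_apply] at hi
  linarith [dist_triangle (f^[i] y) (f^[i] (f^[m] x)) (f^[i] (f^[m] z))]
end

section
/- Let X be a compact metric space, f : X → X a continuous map, and Λ ⊆ X a closed f-invariant subset such that f|_Λ : Λ → Λ is minimal and equicontinuous. If ⋃_{x∈Λ} V_ε^s(x) is dense in X for every ε > 0, and the product map f|_Λ × f : Λ × X → Λ × X is transitive, then V_ε^s(x) is dense in X for every x ∈ Λ and every ε > 0. -/
/-!
Fix `x ∈ Λ`, `ε > 0` and a non-empty open set `U`; a point of `V_ε^s(x)` in `U` is wanted.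
By equicontinuity it suffices to find `y`, `z ∈ Λ` and a time `i` such that `y` shadows `z` in the
limit, `f^i y ∈ U`, and `f^i z` is close to `x`: then `f^i y` lies in `V_ε^s(x)`.

Cover `Λ` by finitely many small balls centred at `a₁, …, aₙ`. Transitivity of `f|_Λ × f`, applied
successively, produces times `i₁, …, iₙ` such that `f^{iₖ}` carries a point near `aₖ` close to `x`
and such that the open set `W = ⋂ₖ f^{-iₖ}(U)` is non-empty (`exists_open_common_times`). By
equicontinuity, `f^{iₖ}` then carries the whole ball around `aₖ` close to `x`. The density of
`⋃_{z ∈ Λ} V^s(z)` gives `y ∈ W` shadowing some `z ∈ Λ`, and the time `iₖ` of a ball containing `z`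
has the required properties, whichever ball that is.
-/

open Filter Topology

section

variable {X : Type*} [MetricSpace X]

lemma mem_Vs_of_eventually {f : X → X} {x y : X} {ε : ℝ}
    (h : ∀ᶠ i in atTop, dist (f^[i] x) (f^[i] y) ≤ ε) : y ∈ Vs f x ε := by
  have hb : IsBoundedUnder (· ≥ ·) atTop (fun i : ℕ => dist (f^[i] x) (f^[i] y)) :=
    isBoundedUnder_of ⟨0, fun _ => dist_nonneg⟩
  exact limsup_le_of_le hb.isCoboundedUnder_le h

lemma eventually_lt_of_mem_Vs [CompactSpace X] {f : X → X} {x y : X} {ε η : ℝ}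
    (h : y ∈ Vs f x ε) (hη : ε < η) : ∀ᶠ i in atTop, dist (f^[i] x) (f^[i] y) < η := by
  have hb : IsBoundedUnder (· ≤ ·) atTop (fun i : ℕ => dist (f^[i] x) (f^[i] y)) :=
    isBoundedUnder_of ⟨Metric.diam (Set.univ : Set X), fun _ =>
      Metric.dist_le_diam_of_mem isCompact_univ.isBounded (Set.mem_univ _) (Set.mem_univ _)⟩
  exact eventually_lt_of_limsup_lt (lt_of_le_of_lt h hη) hb

/-- Iterated transitivity: for finitely many `a ∈ Λ`, times `i = i(a)` can be chosen so that `f^i`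
carries some point of `Λ` near `a` close to `x`, while the sets `f^{-i}(U)` have a common non-empty
open subset `W`. -/
lemma exists_open_common_times {f : X → X} (hf : Continuous f) {Λ : Set X}
    (hinv : Set.MapsTo f Λ Λ)
    (htrans : IsTransitive (Prod.map (Set.MapsTo.restrict f Λ Λ hinv) f))
    {x : X} (hx : x ∈ Λ) {U : Set X} (hU : IsOpen U) (hUne : U.Nonempty)
    {r s : ℝ} (hr : 0 < r) (hs : 0 < s) {t : Set X} (ht : t.Finite) (htΛ : t ⊆ Λ) :
    ∃ W : Set X, IsOpen W ∧ W.Nonempty ∧ ∀ a ∈ t, ∃ i : ℕ, (∀ w ∈ W, f^[i] w ∈ U) ∧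
      ∃ p ∈ Λ, dist p a < r ∧ dist (f^[i] p) x < s := by
  induction t, ht using Set.Finite.induction_on with
  | empty => exact ⟨U, hU, hUne, by simp⟩
  | @insert a t _ _ ih =>
    obtain ⟨W, hWo, ⟨w₀, hw₀⟩, hW⟩ := ih ((Set.subset_insert a t).trans htΛ)
    obtain ⟨u₀, hu₀⟩ := hUne
    have ha : a ∈ Λ := htΛ (Set.mem_insert a t)
    obtain ⟨i, ⟨p, w⟩, ⟨hp, hw⟩, hi⟩ := htrans
      (Metric.ball (⟨a, ha⟩ : Λ) r ×ˢ W) (Metric.ball (⟨x, hx⟩ : Λ) s ×ˢ U)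
      (Metric.isOpen_ball.prod hWo) (Metric.isOpen_ball.prod hU)
      ⟨(⟨a, ha⟩, w₀), Metric.mem_ball_self hr, hw₀⟩
      ⟨(⟨x, hx⟩, u₀), Metric.mem_ball_self hs, hu₀⟩
    rw [Prod.map_iterate] at hi
    obtain ⟨hi₁, hi₂⟩ := hi
    have hcoe : (((Set.MapsTo.restrict f Λ Λ hinv)^[i] p : Λ) : X) = f^[i] p := by
      rw [hinv.iterate_restrict, Set.MapsTo.val_restrict_apply]
    refine ⟨W ∩ f^[i] ⁻¹' U, hWo.inter (hU.preimage (hf.iterate i)), ⟨w, hw, hi₂⟩, ?_⟩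
    rintro b (rfl | hb)
    · refine ⟨i, fun v hv => hv.2, p, p.2, hp, ?_⟩
      rw [← hcoe]
      exact hi₁
    · obtain ⟨j, hj, hp⟩ := hW b hb
      exact ⟨j, fun v hv => hj v hv.1, hp⟩

end

/-- Lemma 2.5: with `f|_Λ` minimal and equicontinuous, if `⋃_{x∈Λ} V_ε^s(x)`
is dense for all `ε > 0` and `f|_Λ × f` is transitive, then every `V_ε^s(x)`, `x ∈ Λ`,
`ε > 0`, is dense. -/
theorem dense_stable_sets {X : Type*} [MetricSpace X] [CompactSpace X]
    (f : X → X) (hf : Continuous f) (Λ : Set X)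
    (hclosed : IsClosed Λ) (hinv : Set.MapsTo f Λ Λ)
    (hmin : MinimalOn f Λ) (heq : EquicontOnSet f Λ)
    (hunion : ∀ ε : ℝ, 0 < ε → Dense (⋃ x ∈ Λ, Vs f x ε))
    (htrans : IsTransitive (Prod.map (Set.MapsTo.restrict f Λ Λ hinv) f)) :
    ∀ x ∈ Λ, ∀ ε : ℝ, 0 < ε → Dense (Vs f x ε) := by
  intro x hx ε hε
  rw [dense_iff_inter_open]
  intro U hU hUne
  obtain ⟨δ, hδ, hδε⟩ := heq (ε / 2) (by positivity)
  obtain ⟨r, hr, hrδ⟩ := heq (δ / 3) (by positivity)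
  obtain ⟨t, htΛ, htfin, hcover⟩ := hclosed.isCompact.finite_cover_balls hr
  obtain ⟨W, hWo, hWne, hW⟩ := exists_open_common_times hf hinv htrans hx hU hUne hr
    (show 0 < δ / 3 by positivity) htfin htΛ
  obtain ⟨y, hyW, hy⟩ := (hunion (ε / 4) (by positivity)).inter_open_nonempty W hWo hWne
  simp only [Set.mem_iUnion] at hy
  obtain ⟨z, hz, hyz⟩ := hy
  have hzc := hcover hz
  simp only [Set.mem_iUnion] at hzc
  obtain ⟨a, hat, hza⟩ := hzc
  obtain ⟨i, hiW, p, hp, hpa, hpx⟩ := hW a hat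
  have haΛ := htΛ hat
  -- The ball around `a` moves together under `f^i`, so `f^i z` is close to `x` like `f^i p`.
  have hzx : dist x (f^[i] z) ≤ δ := by
    have h₁ := hrδ z hz a haΛ (le_of_lt hza) i
    have h₂ := hrδ p hp a haΛ hpa.le i
    have h₃ := dist_triangle4 x (f^[i] p) (f^[i] a) (f^[i] z)
    rw [dist_comm x (f^[i] p), dist_comm (f^[i] a) (f^[i] z)] at h₃
    linarith
  refine ⟨f^[i] y, hiW y hyW, mem_Vs_of_eventually ?_⟩
  have hev := eventually_lt_of_mem_Vs hyz (show ε / 4 < ε / 2 by linarith)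
  filter_upwards [(tendsto_add_atTop_nat i).eventually hev] with j hj
  rw [Function.iterate_add_apply, Function.iterate_add_apply] at hj
  have h₁ := hδε x hx (f^[i] z) (hinv.iterate i hz) hzx j
  have h₂ := dist_triangle (f^[j] x) (f^[j] (f^[i] z)) (f^[j] (f^[i] y))
  linarith
end

section
/- Let X be a compact metric space, f : X → X a continuous map, and x ∈ X. The forward orbit {f^i(x) : i ≥ 0} is a distal set for f if and only if one of the following holds: (i) the forward orbit is finite and x is a periodic point of f; or (ii) the forward orbit is infinite and ω(x,f) ∩ Per(f) = ∅. -/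
/-!
Distality of the orbit is a condition on pairs `f^[a] x ≠ f^[b] x` (`distalSet_of_pairs`,
`DistalSet.pair`).

If the orbit is distal and `p > 0`, the pair `x`, `f^[p] x` decides everything. When the orbit is
finite, `f^[a] x = f^[a + p] x` for some `a` and `p > 0`, so this pair collides at time `a` and
distality forces `x = f^[p] x`. When the orbit is infinite and `f^[φ j] x → y` with `f^[p] y = y`,
the images `f^[φ j] x` and `f^[φ j] (f^[p] x)` both converge to `y`, although `x ≠ f^[p] x`.

Conversely, on the orbit of a periodic point every iterate of `f` is injective, so two distinct
points stay distinct, and the distances of their images range over a finite set of positive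
numbers. If the orbit is infinite, then all `f^[i] x` are distinct; if some pair `f^[a] x`,
`f^[a + p] x` were not uniformly separated, then by compactness `f^[φ j] (f^[a] x)` would converge,
along times at which the distance tends to `0`, to a point of the ω-limit set fixed by `f^[p]`.
-/

open Filter Topology

/-- The set of periodic points of `f`. -/
def Per {X : Type*} (f : X → X) : Set X :=
  {y | ∃ i : ℕ, 0 < i ∧ f^[i] y = y}

/-- The ω-limit set of `x` under `f`: limits of subsequences of the forward orbit. -/
def omegaLimitSet {X : Type*} [TopologicalSpace X] (f : X → X) (x : X) : Set X :=
  {y | ∃ φ : ℕ → ℕ, StrictMono φ ∧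
    Filter.Tendsto (fun j => f^[φ j] x) Filter.atTop (nhds y)}

/-- A distal set separates any two distinct points of it by a uniform positive distance. -/
lemma DistalSet.pair {X : Type*} [MetricSpace X] {f : X → X} {S : Set X} (h : DistalSet f S)
    {u v : X} (hu : u ∈ S) (hv : v ∈ S) (huv : u ≠ v) :
    ∃ c : ℝ, 0 < c ∧ ∀ i : ℕ, c ≤ dist (f^[i] u) (f^[i] v) := by
  obtain ⟨c, hc, H⟩ := h 2 le_rfl ![u, v] (by intro j; fin_cases j <;> simpa)
    (by intro i j hij; fin_cases i <;> fin_cases j <;> simp_all)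
  exact ⟨c, hc, fun i => by simpa using H i 0 1 (by simp)⟩

lemma distalSet_of_pairs {X : Type*} [MetricSpace X] {f : X → X} {S : Set X}
    (h : ∀ u ∈ S, ∀ v ∈ S, u ≠ v → ∃ c : ℝ, 0 < c ∧ ∀ i : ℕ, c ≤ dist (f^[i] u) (f^[i] v)) :
    DistalSet f S := by
  intro n hn x hx hinj
  have h' : ∀ q : Fin n × Fin n, ∃ c : ℝ, 0 < c ∧
      (q.1 ≠ q.2 → ∀ i : ℕ, c ≤ dist (f^[i] (x q.1)) (f^[i] (x q.2))) := by
    intro q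
    by_cases hq : q.1 = q.2
    · exact ⟨1, one_pos, fun h => absurd hq h⟩
    · obtain ⟨c, hc, H⟩ := h _ (hx q.1) _ (hx q.2) (fun e => hq (hinj e))
      exact ⟨c, hc, fun _ => H⟩
  choose c hc H using h'
  have : Nonempty (Fin n) := ⟨⟨0, by omega⟩⟩
  obtain ⟨q, hq⟩ := Finite.exists_min c
  exact ⟨c q, hc q, fun i j k hjk => (hq (j, k)).trans (H (j, k) hjk.ne i)⟩

lemma exists_pos_le_of_eventually {g : ℕ → ℝ} (hg : ∀ i, 0 < g i) {c : ℝ} (hc : 0 < c)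
    (h : ∀ᶠ i in atTop, c ≤ g i) : ∃ c' : ℝ, 0 < c' ∧ ∀ i, c' ≤ g i := by
  obtain ⟨N, hN⟩ := eventually_atTop.1 h
  obtain ⟨m, -, hm⟩ := (Finset.range (N + 1)).exists_min_image g ⟨0, by simp⟩
  refine ⟨min c (g m), lt_min hc (hg m), fun i => ?_⟩
  rcases le_total N i with hi | hi
  · exact (min_le_left _ _).trans (hN i hi)
  · exact (min_le_right _ _).trans (hm i (by simp; omega))

/-- An eventually periodic point has a finite orbit. -/
lemma finite_orbit_of_iterate_eq {X : Type*} {f : X → X} {x : X} {a p : ℕ} (hp : 0 < p)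
    (h : f^[p] (f^[a] x) = f^[a] x) : (Set.range fun i : ℕ => f^[i] x).Finite := by
  refine ((Set.finite_lt_nat (a + p)).image fun i => f^[i] x).subset ?_
  rintro _ ⟨i, rfl⟩
  induction i using Nat.strong_induction_on with
  | _ i ih =>
    rcases lt_or_ge i (a + p) with hi | hi
    · exact ⟨i, hi, rfl⟩
    · -- one period can be removed from `i` without changing the iterate
      have e : f^[i] x = f^[i - p] x := by
        obtain ⟨k, rfl⟩ := Nat.exists_eq_add_of_le hi
        rw [show a + p + k = k + (p + a) by omega, Function.iterate_add_apply,
          Function.iterate_add_apply f p a, h, ← Function.iterate_add_apply]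
        congr 1
        omega
      have := ih (i - p) (by omega)
      simpa only [e] using this

/-- In an infinite orbit with no periodic ω-limit point, two points at different times are
uniformly separated. -/
lemma separated_of_infinite {X : Type*} [MetricSpace X] [CompactSpace X] {f : X → X}
    (hf : Continuous f) {x : X} (hinf : (Set.range fun i : ℕ => f^[i] x).Infinite)
    (hω : omegaLimitSet f x ∩ Per f = ∅) (a : ℕ) {p : ℕ} (hp : 0 < p) :
    ∃ c : ℝ, 0 < c ∧ ∀ i : ℕ, c ≤ dist (f^[i] (f^[a] x)) (f^[i] (f^[a + p] x)) := by
  have hcomm : ∀ i, f^[i] (f^[a + p] x) = f^[p] (f^[i + a] x) := fun i => by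
    rw [← Function.iterate_add_apply, ← Function.iterate_add_apply,
      show i + (a + p) = p + (i + a) by omega]
  simp only [hcomm, ← Function.iterate_add_apply f _ a]
  have hpos : ∀ i, 0 < dist (f^[i + a] x) (f^[p] (f^[i + a] x)) := fun i =>
    dist_pos.2 fun e => hinf (finite_orbit_of_iterate_eq hp e.symm)
  by_cases hev : ∃ c > 0, ∀ᶠ i in atTop, c ≤ dist (f^[i + a] x) (f^[p] (f^[i + a] x))
  · obtain ⟨c, hc, h⟩ := hev
    exact exists_pos_le_of_eventually hpos hc h
  · exfalso
    push Not at hev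
    obtain ⟨φ, hφ, hlt⟩ := extraction_forall_of_frequently
      (fun n : ℕ => hev (1 / ((n : ℝ) + 1)) (by positivity))
    obtain ⟨y, ψ, hψ, hy⟩ := CompactSpace.tendsto_subseq fun j => f^[φ j + a] x
    have h0 : Tendsto (fun j => dist (f^[φ (ψ j) + a] x) (f^[p] (f^[φ (ψ j) + a] x)))
        atTop (𝓝 0) :=
      squeeze_zero (fun _ => dist_nonneg) (fun j => (hlt (ψ j)).le)
        ((tendsto_one_div_add_atTop_nhds_zero_nat (𝕜 := ℝ)).comp hψ.tendsto_atTop)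
    have h1 : Tendsto (fun j => dist (f^[φ (ψ j) + a] x) (f^[p] (f^[φ (ψ j) + a] x)))
        atTop (𝓝 (dist y (f^[p] y))) :=
      hy.dist (((hf.iterate p).tendsto y).comp hy)
    have hfix : f^[p] y = y := (dist_eq_zero.1 (tendsto_nhds_unique h1 h0)).symm
    have hmem : y ∈ omegaLimitSet f x ∩ Per f :=
      ⟨⟨fun j => φ (ψ j) + a, fun i j hij => Nat.add_lt_add_right (hφ (hψ hij)) a, hy⟩,
        p, hp, hfix⟩
    simp [hω] at hmem

/-- Two distinct points of a finite orbit of a periodic point are uniformly separated. -/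
lemma separated_of_periodic {X : Type*} [MetricSpace X] {f : X → X} {x : X}
    (hfin : (Set.range fun i : ℕ => f^[i] x).Finite) {p : ℕ} (hp : 0 < p) (hx : f^[p] x = x)
    {a b : ℕ} (hne : f^[a] x ≠ f^[b] x) :
    ∃ c : ℝ, 0 < c ∧ ∀ i : ℕ, c ≤ dist (f^[i] (f^[a] x)) (f^[i] (f^[b] x)) := by
  have hper : ∀ a i, f^[i * p] (f^[a] x) = f^[a] x := fun a i =>
    ((Function.IsPeriodicPt.apply_iterate (show Function.IsPeriodicPt f p x from hx) a).const_mul i)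
  have hpos : ∀ i, 0 < dist (f^[i] (f^[a] x)) (f^[i] (f^[b] x)) := fun i => by
    refine dist_pos.2 fun e => hne ?_
    -- after the collision at time `i`, running on to time `i * p ≥ i` returns both points
    have h := congrArg f^[i * p - i] e
    have hi : i * p - i + i = i * p := Nat.sub_add_cancel (Nat.le_mul_of_pos_right i hp)
    rwa [← Function.iterate_add_apply f _ i, ← Function.iterate_add_apply f _ i, hi, hper, hper]
      at h
  have hrange : (Set.range fun i => dist (f^[i] (f^[a] x)) (f^[i] (f^[b] x))).Finite := by
    refine (hfin.image2 dist hfin).subset ?_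
    rintro _ ⟨i, rfl⟩
    exact ⟨_, ⟨i + a, rfl⟩, _, ⟨i + b, rfl⟩, by simp only [Function.iterate_add_apply]⟩
  obtain ⟨_, ⟨m, rfl⟩, hm⟩ := Set.exists_min_image _ id hrange (Set.range_nonempty _)
  exact ⟨_, hpos m, fun i => hm _ ⟨i, rfl⟩⟩

/-- the forward orbit of `x` is a distal set for `f` iff either it is finite
and `x` is periodic, or it is infinite and `ω(x,f) ∩ Per(f) = ∅`. -/
theorem orbit_distal_iff {X : Type*} [MetricSpace X] [CompactSpace X]
    (f : X → X) (hf : Continuous f) (x : X) :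
    DistalSet f (Set.range fun i : ℕ => f^[i] x) ↔
      ((Set.range fun i : ℕ => f^[i] x).Finite ∧ x ∈ Per f) ∨
      ((Set.range fun i : ℕ => f^[i] x).Infinite ∧ omegaLimitSet f x ∩ Per f = ∅) := by
  constructor
  · intro h
    have hpair : ∀ p, f^[p] x ≠ x → ∃ c : ℝ, 0 < c ∧ ∀ i : ℕ,
        c ≤ dist (f^[i] x) (f^[p] (f^[i] x)) := fun p hp => by
      obtain ⟨c, hc, H⟩ := h.pair (u := x) (v := f^[p] x) ⟨0, rfl⟩ ⟨p, rfl⟩ hp.symm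
      refine ⟨c, hc, fun i => ?_⟩
      have := H i
      rwa [← Function.iterate_add_apply, Nat.add_comm, Function.iterate_add_apply] at this
    by_cases hfin : (Set.range fun i : ℕ => f^[i] x).Finite
    · refine Or.inl ⟨hfin, ?_⟩
      obtain ⟨a, b, hab, e⟩ : ∃ a b : ℕ, a < b ∧ f^[a] x = f^[b] x := by
        by_contra! hcon
        refine Set.infinite_range_of_injective (f := fun i : ℕ => f^[i] x) ?_ hfin
        intro i j hij
        by_contra hne
        rcases lt_or_gt_of_ne hne with hl | hl
        · exact hcon i j hl hij
        · exact hcon j i hl hij.symm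
      by_contra hx
      obtain ⟨c, hc, H⟩ := hpair (b - a) fun e' => hx ⟨b - a, by omega, e'⟩
      have := H a
      rw [← Function.iterate_add_apply, Nat.sub_add_cancel hab.le, e, dist_self] at this
      linarith
    · refine Or.inr ⟨hfin, Set.eq_empty_iff_forall_notMem.2 ?_⟩
      rintro y ⟨⟨φ, -, hy⟩, p, hp, hfix⟩
      obtain ⟨c, hc, H⟩ := hpair p fun e => hfin (finite_orbit_of_iterate_eq (a := 0) hp e)
      have h1 := hy.dist (((hf.iterate p).tendsto y).comp hy)
      rw [hfix, dist_self] at h1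
      have := ge_of_tendsto' h1 fun j => H (φ j)
      linarith
  · intro h
    refine distalSet_of_pairs ?_
    rintro _ ⟨a, rfl⟩ _ ⟨b, rfl⟩ hne
    rcases h with ⟨hfin, p, hp, hx⟩ | ⟨hinf, hω⟩
    · exact separated_of_periodic hfin hp hx hne
    · rcases lt_trichotomy a b with hab | rfl | hab
      · have H := separated_of_infinite hf hinf hω a (Nat.sub_pos_of_lt hab)
        rwa [Nat.add_sub_cancel' hab.le] at H
      · exact absurd rfl hne
      · obtain ⟨c, hc, H⟩ := separated_of_infinite hf hinf hω b (Nat.sub_pos_of_lt hab)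
        rw [Nat.add_sub_cancel' hab.le] at H
        exact ⟨c, hc, fun i => by rw [dist_comm]; exact H i⟩
end

section
/- Let X be a compact metric space and f : X → X a minimal continuous map. Then for every x ∈ X, the forward orbit {f^i(x) : i ≥ 0} is a distal set for f. -/
/-!
Let `f` be minimal and `p : ℕ`. The fixed-point set of `f^[p]` is closed and forward invariant, so
by minimality it is empty or everything. Two distinct points of an orbit are of the form `y` and
`f^[p] y`, which excludes the second case. By compactness `dist z (f^[p] z)` is then bounded below
by some `c > 0` uniformly in `z`; taking `z = f^[i] y` bounds `dist (f^[i] y) (f^[i] (f^[p] y))`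
for all `i`. A finite tuple has finitely many pairs, so one constant serves all of them.
-/

open Filter Topology

/-- For a minimal map, an iterate `f^[p]` with a fixed point is the identity; otherwise the
displacement `dist y (f^[p] y)` attains a positive minimum by compactness. -/
theorem exists_pos_le_dist_iterate {X : Type*} [MetricSpace X] [CompactSpace X]
    {f : X → X} (hf : Continuous f)
    (hmin : ∀ x : X, closure (Set.range fun i : ℕ => f^[i] x) = Set.univ)
    {p : ℕ} {y : X} (hy : f^[p] y ≠ y) :
    ∃ c : ℝ, 0 < c ∧ ∀ z : X, c ≤ dist z (f^[p] z) := by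
  have hfp : Continuous f^[p] := hf.iterate p
  have hno : ∀ z : X, f^[p] z ≠ z := by
    intro z hz
    -- The fixed-point set of `f^[p]` is closed and contains the (dense) orbit of `z`.
    have hsub : closure (Set.range fun i : ℕ => f^[i] z) ⊆ {w | f^[p] w = w} := by
      refine closure_minimal ?_ (isClosed_eq hfp continuous_id)
      rintro _ ⟨i, rfl⟩
      change f^[p] (f^[i] z) = f^[i] z
      rw [← Function.iterate_add_apply, add_comm, Function.iterate_add_apply, hz]
    rw [hmin z] at hsub
    exact hy (hsub (Set.mem_univ y))
  obtain ⟨m, -, hm⟩ := isCompact_univ.exists_isMinOn ⟨y, Set.mem_univ y⟩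
    (continuous_id.dist hfp).continuousOn
  exact ⟨dist m (f^[p] m), dist_pos.2 (hno m).symm, fun z => hm (Set.mem_univ z)⟩

/-- Two distinct points of one orbit are `f^[a] x` and `f^[p] (f^[a] x)` up to order, so the
displacement bound for `f^[p]` separates their orbits. -/
theorem exists_pos_le_dist_orbit {X : Type*} [MetricSpace X] [CompactSpace X]
    {f : X → X} (hf : Continuous f)
    (hmin : ∀ x : X, closure (Set.range fun i : ℕ => f^[i] x) = Set.univ)
    {x : X} {a b : ℕ} (hne : f^[a] x ≠ f^[b] x) :
    ∃ c : ℝ, 0 < c ∧ ∀ i : ℕ, c ≤ dist (f^[i] (f^[a] x)) (f^[i] (f^[b] x)) := by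
  wlog hab : a ≤ b generalizing a b
  · obtain ⟨c, hc, h⟩ := this hne.symm (le_of_not_ge hab)
    exact ⟨c, hc, fun i => by rw [dist_comm]; exact h i⟩
  obtain ⟨p, rfl⟩ := Nat.exists_eq_add_of_le' hab
  rw [Function.iterate_add_apply] at hne
  obtain ⟨c, hc, h⟩ := exists_pos_le_dist_iterate hf hmin hne.symm
  refine ⟨c, hc, fun i => ?_⟩
  have hcomm : f^[i] (f^[p + a] x) = f^[p] (f^[i] (f^[a] x)) := by
    simp only [← Function.iterate_add_apply, add_left_comm]
  rw [hcomm]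
  exact h _

/-- if `f` is minimal, then every forward orbit is a distal set for `f`. -/
theorem orbit_distal_of_minimal {X : Type*} [MetricSpace X] [CompactSpace X]
    (f : X → X) (hf : Continuous f)
    (hmin : ∀ x : X, closure (Set.range fun i : ℕ => f^[i] x) = Set.univ) :
    ∀ x : X, DistalSet f (Set.range fun i : ℕ => f^[i] x) := by
  intro x n _ y hy hinj
  choose a ha using hy
  have hpair : ∀ q : Fin n × Fin n, ∃ c : ℝ, 0 < c ∧
      (q.1 < q.2 → ∀ i : ℕ, c ≤ dist (f^[i] (y q.1)) (f^[i] (y q.2))) := by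
    rintro ⟨j, k⟩
    by_cases hjk : j < k
    · have hne : f^[a j] x ≠ f^[a k] x := by
        intro h
        exact hjk.ne (hinj ((ha j).symm.trans (h.trans (ha k))))
      obtain ⟨c, hc, h⟩ := exists_pos_le_dist_orbit hf hmin hne
      refine ⟨c, hc, fun _ i => ?_⟩
      rw [← ha j, ← ha k]
      exact h i
    · exact ⟨1, one_pos, fun h => absurd h hjk⟩
  choose C hC hdist using hpair
  -- A positive real below each of the finitely many positive reals `C q`.
  have hev : ∀ᶠ c in 𝓝[>] (0 : ℝ), ∀ q, c < C q :=
    eventually_all.2 fun q => nhdsWithin_le_nhds (Iio_mem_nhds (hC q))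
  obtain ⟨c, hlt, hc⟩ := (hev.and self_mem_nhdsWithin).exists
  exact ⟨c, hc, fun i j k hjk => (hlt (j, k)).le.trans (hdist (j, k) hjk i)⟩
end

section
/- Let X be a compact metric space and f : X → X a surjective continuous map. Then for any x ∈ X and ε > 0, if V_ε^s(x) is dense in X, then V_ε^s(f^i(x)) is dense in X for every i ≥ 0. -/
open Filter Topology

/-- for surjective `f`, if `V_ε^s(x)` is dense, then so is every
`V_ε^s(f^i(x))`. -/
theorem dense_Vs_iterate {X : Type*} [MetricSpace X] [CompactSpace X]
    (f : X → X) (hf : Continuous f) (hsurj : Function.Surjective f)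
    (x : X) (ε : ℝ) (hε : 0 < ε) (hdense : Dense (Vs f x ε)) :
    ∀ i : ℕ, Dense (Vs f (f^[i] x) ε) := by
  intro i
  -- A continuous surjection has dense range, so it carries dense sets to dense sets.
  refine ((hsurj.iterate i).denseRange.dense_image (hf.iterate i) hdense).mono ?_
  -- `f^[i]` maps `Vs f x ε` into `Vs f (f^[i] x) ε`: the distances along the orbits are merely
  -- shifted by `i`, which leaves the limsup unchanged.
  rintro _ ⟨y, hy, rfl⟩
  simp only [Vs, Set.mem_setOf_eq, ← Function.iterate_add_apply] at hy ⊢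
  rwa [Filter.limsup_nat_add (fun n : ℕ => dist (f^[n] x) (f^[n] y)) i]
end

section
/- Let X be a compact metric space and f : X → X a continuous map. Then f is 𝓕_rr*-transitive if and only if f is totally transitive, i.e., f^k is transitive for every k ≥ 1. -/
open Filter Topology

/-- The Furstenberg family `𝓕_rr` of sets containing some `kℕ₀`. -/
def Frr : Set (Set ℕ) :=
  {A | ∃ k : ℕ, 1 ≤ k ∧ ∀ m : ℕ, k * m ∈ A}

/-- `f` is `𝓕_rr*`-transitive iff `f` is totally transitive. -/
theorem FrrDual_transitive_iff_totally_transitive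
    {X : Type*} [MetricSpace X] [CompactSpace X] (f : X → X) (hf : Continuous f) :
    FTransitive f (dualFamily Frr) ↔ ∀ k : ℕ, 1 ≤ k → IsTransitive f^[k] := by
  constructor
  · intro h k hk U V hU hV hUn hVn
    obtain ⟨_, ⟨x, hx, hxV⟩, m, rfl⟩ :=
      h U V hU hV hUn hVn (Set.range (k * ·)) ⟨k, hk, fun m => ⟨m, rfl⟩⟩
    exact ⟨m, x, hx, by rwa [← Function.iterate_mul]⟩
  · rintro h U V hU hV hUn hVn B ⟨k, hk, hB⟩
    obtain ⟨m, x, hx, hxV⟩ := h k hk U V hU hV hUn hVn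
    exact ⟨k * m, ⟨x, hx, by rwa [Function.iterate_mul]⟩, hB m⟩
end

section
/- The Furstenberg families 𝓕_rr, 𝓕_b, 𝓕_s, 𝓕_t satisfy the inclusions 𝓕_rr ⊆ Δ(𝓕_b) ⊆ Δ(𝓕_s) ⊆ 𝓕_s and consequently 𝓕_t ⊆ Δ(𝓕_s)* ⊆ Δ(𝓕_b)* ⊆ 𝓕_rr*; in particular, for any continuous self-map f of a compact metric space X, if f is 𝓕_t-transitive then f is Δ(𝓕_s)*-transitive, if f is Δ(𝓕_s)*-transitive then f is Δ(𝓕_b)*-transitive, and if f is Δ(𝓕_b)*-transitive then f is 𝓕_rr*-transitive. -/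
/-!
The inclusion `𝓕_rr ⊆ Δ(𝓕_b)` is witnessed by the rotation `x ↦ x + 1` of the finite space
`ZMod k`, whose return times are exactly the multiples of `k`; their differences are again
multiples of `k`. The inclusion `Δ(𝓕_b) ⊆ Δ(𝓕_s)` follows from `𝓕_b ⊆ 𝓕_s`: in a minimal compact
system the preimages of a ball under the iterates cover the space, and a finite subcover bounds the
gaps between consecutive returns. If `0 ∈ A` then `A ⊆ Δ(A)`, whence `Δ(𝓕_s) ⊆ 𝓕_s`. A thick set
meets every syndetic set, and passing to the dual family reverses inclusions, which gives the
remaining inclusions and the implications between the transitivity notions.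
-/

open Filter Topology

/-- The Furstenberg family `𝓕_b` of sets containing some return-time set `N(y,δ)` of a
minimal equicontinuous system. -/
def Fb : Set (Set ℕ) :=
  {A | ∃ (Y : Type) (_ : MetricSpace Y) (_ : CompactSpace Y) (g : Y → Y),
    Continuous g ∧
    (∀ y : Y, closure (Set.range fun i : ℕ => g^[i] y) = Set.univ) ∧
    (∀ ε : ℝ, 0 < ε → ∃ δ : ℝ, 0 < δ ∧ ∀ u v : Y, dist u v ≤ δ →
      ∀ i : ℕ, dist (g^[i] u) (g^[i] v) ≤ ε) ∧
    ∃ (y : Y) (δ : ℝ), 0 < δ ∧ {i : ℕ | dist y (g^[i] y) ≤ δ} ⊆ A}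

/-- The Furstenberg family `𝓕_s` of syndetic sets. -/
def Fs : Set (Set ℕ) :=
  {A | ∃ k : ℕ, 1 ≤ k ∧ ∀ i : ℕ, ∃ j ∈ A, i ≤ j ∧ j < i + k}

/-- The Furstenberg family `𝓕_t` of thick sets. -/
def Ft : Set (Set ℕ) :=
  {B | ∀ j : ℕ, 1 ≤ j → ∃ i : ℕ, ∀ l : ℕ, l < j → i + l ∈ B}

theorem dualFamily_anti {F G : Set (Set ℕ)} (h : F ⊆ G) : dualFamily G ⊆ dualFamily F :=
  fun _ hA B hB => hA B (h hB)

theorem deltaFamily_mono {F G : Set (Set ℕ)} (h : F ⊆ G) : deltaFamily F ⊆ deltaFamily G :=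
  fun _ ⟨A, hA, h0⟩ => ⟨A, h hA, h0⟩

theorem FTransitive.mono {X : Type*} [TopologicalSpace X] {f : X → X} {F G : Set (Set ℕ)}
    (h : F ⊆ G) (hf : FTransitive f F) : FTransitive f G :=
  fun U V hU hV hU' hV' => h (hf U V hU hV hU' hV')

/-- Minimality and compactness alone make return times syndetic; equicontinuity plays no role. -/
theorem Fb_subset_Fs : Fb ⊆ Fs := by
  rintro A ⟨Y, _, _, g, hg, hmin, -, y, δ, hδ, hA⟩
  have hcover : (Set.univ : Set Y) ⊆ ⋃ i : ℕ, g^[i] ⁻¹' Metric.ball y δ := by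
    intro z _
    have hy : y ∈ closure (Set.range fun i : ℕ => g^[i] z) := by
      rw [hmin z]; trivial
    obtain ⟨_, ⟨i, rfl⟩, hi⟩ := Metric.mem_closure_iff.1 hy δ hδ
    exact Set.mem_iUnion.2 ⟨i, by simpa [dist_comm] using hi⟩
  obtain ⟨t, ht⟩ := isCompact_univ.elim_finite_subcover _
    (fun i => Metric.isOpen_ball.preimage (hg.iterate i)) hcover
  refine ⟨t.sup id + 1, by omega, fun i => ?_⟩
  obtain ⟨n, hn, hn'⟩ := Set.mem_iUnion₂.1 (ht (Set.mem_univ (g^[i] y)))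
  have hle : n ≤ t.sup id := Finset.le_sup (f := id) hn
  refine ⟨n + i, hA ?_, by omega, by omega⟩
  rw [Set.mem_preimage, ← Function.iterate_add_apply, Metric.mem_ball, dist_comm] at hn'
  exact hn'.le

theorem Frr_subset_deltaFamily_Fb : Frr ⊆ deltaFamily Fb := by
  rintro B ⟨k, hk, hB⟩
  have : NeZero k := ⟨by omega⟩
  -- The metric pulled back along `ZMod.val` separates distinct points by at least `1`.
  let M : MetricSpace (ZMod k) :=
    MetricSpace.induced ZMod.val (ZMod.val_injective k) inferInstance
  -- Mathlib's own topology on `ZMod k` is not definitionally the metric one, so it is shadowed.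
  let _ : TopologicalSpace (ZMod k) := M.toUniformSpace.toTopologicalSpace
  have hsep : ∀ u v : ZMod k, dist u v ≤ 1 / 2 → u = v := by
    intro u v h
    by_contra hne
    have h1 : (1 : ℝ) ≤ dist u v :=
      Nat.pairwise_one_le_dist (fun h => hne (ZMod.val_injective k h))
    linarith
  have hiter : ∀ (i : ℕ) (z : ZMod k), (fun x : ZMod k => x + 1)^[i] z = z + i := by
    intro i z
    induction i with
    | zero => simp
    | succ n ih => rw [Function.iterate_succ_apply', ih]; push_cast; ring
  refine ⟨{i | k ∣ i}, ⟨ZMod k, M, Finite.compactSpace, fun x => x + 1,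
    continuous_of_discreteTopology, fun y => ?_, fun ε hε => ⟨1 / 2, by norm_num, ?_⟩,
    0, 1 / 2, by norm_num, ?_⟩, dvd_zero k, ?_⟩
  · refine Set.eq_univ_of_forall fun z => subset_closure ⟨(z - y).val, ?_⟩
    simp [hiter]
  · intro u v h i
    rw [hsep u v h, dist_self]
    exact hε.le
  · intro i hi
    have h := hsep _ _ hi
    rw [hiter, zero_add] at h
    exact (ZMod.natCast_eq_zero_iff i k).1 h.symm
  · rintro _ ⟨a, ha, b, hb, -, rfl⟩
    obtain ⟨m, hm⟩ := Nat.dvd_sub hb ha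
    rw [hm]
    exact hB m

theorem deltaFamily_Fs_subset_Fs : deltaFamily Fs ⊆ Fs := by
  rintro B ⟨A, ⟨k, hk, hA⟩, h0, hB⟩
  refine ⟨k, hk, fun i => ?_⟩
  obtain ⟨j, hj, hij⟩ := hA i
  exact ⟨j, hB ⟨0, h0, j, hj, by omega, by omega⟩, hij⟩

theorem Ft_subset_dualFamily_Fs : Ft ⊆ dualFamily Fs := by
  rintro B hB A ⟨k, hk, hA⟩
  obtain ⟨i, hi⟩ := hB k hk
  obtain ⟨j, hj, hij, hjk⟩ := hA i
  obtain ⟨l, rfl⟩ := Nat.exists_eq_add_of_le hij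
  exact ⟨i + l, hi l (by omega), hj⟩

/-- `𝓕_rr ⊆ Δ(𝓕_b) ⊆ Δ(𝓕_s) ⊆ 𝓕_s`, hence
`𝓕_t ⊆ Δ(𝓕_s)* ⊆ Δ(𝓕_b)* ⊆ 𝓕_rr*`, and the corresponding implications between the
transitivity notions (weakly mixing ⟹ scattering ⟹ weakly scattering ⟹ totally
transitive) hold. -/
theorem family_inclusions :
    Frr ⊆ deltaFamily Fb ∧ deltaFamily Fb ⊆ deltaFamily Fs ∧ deltaFamily Fs ⊆ Fs ∧
    Ft ⊆ dualFamily (deltaFamily Fs) ∧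
    dualFamily (deltaFamily Fs) ⊆ dualFamily (deltaFamily Fb) ∧
    dualFamily (deltaFamily Fb) ⊆ dualFamily Frr ∧
    ∀ (X : Type) (_ : MetricSpace X) (_ : CompactSpace X) (f : X → X), Continuous f →
      (FTransitive f Ft → FTransitive f (dualFamily (deltaFamily Fs))) ∧
      (FTransitive f (dualFamily (deltaFamily Fs)) →
        FTransitive f (dualFamily (deltaFamily Fb))) ∧
      (FTransitive f (dualFamily (deltaFamily Fb)) → FTransitive f (dualFamily Frr)) := by
  have h1 := Frr_subset_deltaFamily_Fb
  have h2 := deltaFamily_mono Fb_subset_Fs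
  have h3 := deltaFamily_Fs_subset_Fs
  have h4 : Ft ⊆ dualFamily (deltaFamily Fs) :=
    Ft_subset_dualFamily_Fs.trans (dualFamily_anti h3)
  exact ⟨h1, h2, h3, h4, dualFamily_anti h2, dualFamily_anti h1, fun X _ _ f _ =>
    ⟨FTransitive.mono h4, FTransitive.mono (dualFamily_anti h2),
      FTransitive.mono (dualFamily_anti h1)⟩⟩
end
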